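/- arXiv:2011.06039 — 4 statements merged into one kernel-verified Lean document; each statement's English description precedes it below -/
import Mathlib

section
/- Let S > 0, 0 < δ₁ < S, δ₂ > 0, and let q : (0,S) × Ω → ℝ be continuous and bounded. Let w be continuous on [0,S] × cl(Ω), with ∂_t w and all spatial partial derivatives of w up to order 2 continuous on (0,S) × Ω, satisfying ∂_t w − Δw + q w = 0 pointwise in (0,S) × Ω, w(t,x) ≥ 0 for all (t,x) ∈ [0,S] × cl(Ω), w(0,x) = 0 for all x ∈ cl(Ω), and w(t,x) = δ₂ for all (t,x) ∈ [δ₁,S] × ∂Ω. Then inf { w(t,x) : (t,x) ∈ [δ₁,S] × cl(Ω) } > 0. -/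
open Set

namespace Paper

noncomputable section

/-- Time derivative `∂ₜu`. -/
def timeDeriv {n : ℕ} (u : ℝ → (Fin n → ℝ) → ℝ) (t : ℝ) (x : Fin n → ℝ) : ℝ :=
  deriv (fun s => u s x) t

/-- Spatial partial derivative `∂ᵢu`. -/
def spatialDeriv {n : ℕ} (u : ℝ → (Fin n → ℝ) → ℝ) (i : Fin n) (t : ℝ) (x : Fin n → ℝ) : ℝ :=
  deriv (fun s => u t (Function.update x i s)) (x i)

/-- Second spatial partial derivative `∂ᵢ∂ⱼu`. -/
def spatialDeriv2 {n : ℕ} (u : ℝ → (Fin n → ℝ) → ℝ) (i j : Fin n) (t : ℝ)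
    (x : Fin n → ℝ) : ℝ :=
  spatialDeriv (spatialDeriv u j) i t x

/-- Laplacian in the space variables. -/
def laplacian {n : ℕ} (u : ℝ → (Fin n → ℝ) → ℝ) (t : ℝ) (x : Fin n → ℝ) : ℝ :=
  ∑ i, spatialDeriv2 u i i t x

/-- Parabolic regularity: `u` is continuous on `[0,S] × cl Ω`, and `∂ₜu` together with all
spatial partial derivatives of `u` up to order 2 exist and are continuous on `(0,S) × Ω`. -/
structure ParabolicRegular {n : ℕ} (Ω : Set (Fin n → ℝ)) (S : ℝ)
    (u : ℝ → (Fin n → ℝ) → ℝ) : Prop where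
  cont : ContinuousOn (fun p : ℝ × (Fin n → ℝ) => u p.1 p.2) (Icc 0 S ×ˢ closure Ω)
  diff_t : ∀ t ∈ Ioo 0 S, ∀ x ∈ Ω, DifferentiableAt ℝ (fun s => u s x) t
  diff_x : ∀ t ∈ Ioo 0 S, ∀ x ∈ Ω, ∀ i,
    DifferentiableAt ℝ (fun s => u t (Function.update x i s)) (x i)
  diff_xx : ∀ t ∈ Ioo 0 S, ∀ x ∈ Ω, ∀ i j,
    DifferentiableAt ℝ (fun s => spatialDeriv u j t (Function.update x i s)) (x i)
  cont_t : ContinuousOn (fun p : ℝ × (Fin n → ℝ) => timeDeriv u p.1 p.2) (Ioo 0 S ×ˢ Ω)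
  cont_x : ∀ i, ContinuousOn (fun p : ℝ × (Fin n → ℝ) => spatialDeriv u i p.1 p.2)
    (Ioo 0 S ×ˢ Ω)
  cont_xx : ∀ i j, ContinuousOn (fun p : ℝ × (Fin n → ℝ) => spatialDeriv2 u i j p.1 p.2)
    (Ioo 0 S ×ˢ Ω)

/-- Classical solution of `∂ₜu − Δu + c u = f` in `(0,S) × Ω` with lateral boundary values `g`
and zero initial values. -/
structure IsClassicalSolution {n : ℕ} (Ω : Set (Fin n → ℝ)) (S : ℝ)
    (c f g u : ℝ → (Fin n → ℝ) → ℝ) extends ParabolicRegular Ω S u : Prop where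
  eqn : ∀ t ∈ Ioo 0 S, ∀ x ∈ Ω, timeDeriv u t x - laplacian u t x + c t x * u t x = f t x
  lateral : ∀ t ∈ Icc 0 S, ∀ x ∈ frontier Ω, u t x = g t x
  initial : ∀ x ∈ closure Ω, u 0 x = 0

/-- `∂_u F` for a semilinear term `F(t,x,u)`. -/
def uDeriv {n : ℕ} (F : ℝ → (Fin n → ℝ) → ℝ → ℝ) (t : ℝ) (x : Fin n → ℝ) (u : ℝ) : ℝ :=
  deriv (F t x) u

/-- `∂_u² F`. -/
def uDeriv2 {n : ℕ} (F : ℝ → (Fin n → ℝ) → ℝ → ℝ) : ℝ → (Fin n → ℝ) → ℝ → ℝ :=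
  uDeriv (uDeriv F)

/-- `∂_u³ F`. -/
def uDeriv3 {n : ℕ} (F : ℝ → (Fin n → ℝ) → ℝ → ℝ) : ℝ → (Fin n → ℝ) → ℝ → ℝ :=
  uDeriv (uDeriv2 F)

/-- `∂_u⁴ F`. -/
def uDeriv4 {n : ℕ} (F : ℝ → (Fin n → ℝ) → ℝ → ℝ) : ℝ → (Fin n → ℝ) → ℝ → ℝ :=
  uDeriv (uDeriv3 F)

/-- `∂ₜF` for `F` depending on `(t,x,u)`. -/
def FtDeriv {n : ℕ} (F : ℝ → (Fin n → ℝ) → ℝ → ℝ) (t : ℝ) (x : Fin n → ℝ) (u : ℝ) : ℝ :=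
  deriv (fun s => F s x u) t

/-- `∂_{xᵢ}F` for `F` depending on `(t,x,u)`. -/
def FxDeriv {n : ℕ} (F : ℝ → (Fin n → ℝ) → ℝ → ℝ) (i : Fin n) (t : ℝ) (x : Fin n → ℝ)
    (u : ℝ) : ℝ :=
  deriv (fun s => F t (Function.update x i s) u) (x i)

/-- `F` is continuous on `[0,S] × cl Ω × ℝ` and continuously differentiable in the last
variable. -/
def C1InU {n : ℕ} (Ω : Set (Fin n → ℝ)) (S : ℝ) (F : ℝ → (Fin n → ℝ) → ℝ → ℝ) : Prop :=
  ContinuousOn (fun p : ℝ × (Fin n → ℝ) × ℝ => F p.1 p.2.1 p.2.2)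
    (Icc 0 S ×ˢ closure Ω ×ˢ (univ : Set ℝ)) ∧
  (∀ t ∈ Icc 0 S, ∀ x ∈ closure Ω, ∀ u : ℝ, DifferentiableAt ℝ (F t x) u) ∧
  ContinuousOn (fun p : ℝ × (Fin n → ℝ) × ℝ => uDeriv F p.1 p.2.1 p.2.2)
    (Icc 0 S ×ˢ closure Ω ×ˢ (univ : Set ℝ))

/-- `F` is continuous and twice continuously differentiable in the last variable. -/
def C2InU {n : ℕ} (Ω : Set (Fin n → ℝ)) (S : ℝ) (F : ℝ → (Fin n → ℝ) → ℝ → ℝ) : Prop :=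
  C1InU Ω S F ∧
  (∀ t ∈ Icc 0 S, ∀ x ∈ closure Ω, ∀ u : ℝ, DifferentiableAt ℝ (uDeriv F t x) u) ∧
  ContinuousOn (fun p : ℝ × (Fin n → ℝ) × ℝ => uDeriv2 F p.1 p.2.1 p.2.2)
    (Icc 0 S ×ˢ closure Ω ×ˢ (univ : Set ℝ))

/-- `‖f‖_{W^{1,∞}} ≤ B` on `[0,S] × cl Ω`, stated componentwise: `f`, `∂ₜf` and all `∂ᵢf`
are bounded by `B` in absolute value. -/
def W1infLE {n : ℕ} (Ω : Set (Fin n → ℝ)) (S : ℝ) (f : ℝ → (Fin n → ℝ) → ℝ) (B : ℝ) : Prop :=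
  ∀ t ∈ Icc 0 S, ∀ x ∈ closure Ω,
    |f t x| ≤ B ∧ |timeDeriv f t x| ≤ B ∧ ∀ i, |spatialDeriv f i t x| ≤ B

/-- `f` has bounded continuous first-order derivatives on `[0,S] × cl Ω`. -/
def C1Bounded {n : ℕ} (Ω : Set (Fin n → ℝ)) (S : ℝ) (f : ℝ → (Fin n → ℝ) → ℝ) : Prop :=
  (∀ t ∈ Icc 0 S, ∀ x ∈ closure Ω, DifferentiableAt ℝ (fun s => f s x) t ∧
    ∀ i, DifferentiableAt ℝ (fun s => f t (Function.update x i s)) (x i)) ∧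
  ContinuousOn (fun p : ℝ × (Fin n → ℝ) => f p.1 p.2) (Icc 0 S ×ˢ closure Ω) ∧
  ContinuousOn (fun p : ℝ × (Fin n → ℝ) => timeDeriv f p.1 p.2) (Icc 0 S ×ˢ closure Ω) ∧
  (∀ i, ContinuousOn (fun p : ℝ × (Fin n → ℝ) => spatialDeriv f i p.1 p.2)
    (Icc 0 S ×ˢ closure Ω)) ∧
  ∃ B, W1infLE Ω S f B

/-- Componentwise bound `‖f‖_* ≤ ε` for the parabolic Schauder norm of
`C([0,S];C^{2+α}(cl Ω)) ∩ C^{1+α/2}([0,S];C(cl Ω))`: sup bounds on `f`, `∂ₜf`, spatial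
derivatives up to order 2, the `α`-Hölder (in `x`) seminorms of the second spatial derivatives,
and the `α/2`-Hölder (in `t`) seminorm of `∂ₜf`. -/
def SchauderLE {n : ℕ} (α : ℝ) (Ω : Set (Fin n → ℝ)) (S : ℝ) (f : ℝ → (Fin n → ℝ) → ℝ)
    (ε : ℝ) : Prop :=
  (∀ t ∈ Icc 0 S, ∀ x ∈ closure Ω,
    |f t x| ≤ ε ∧ |timeDeriv f t x| ≤ ε ∧ (∀ i, |spatialDeriv f i t x| ≤ ε) ∧
    ∀ i j, |spatialDeriv2 f i j t x| ≤ ε) ∧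
  (∀ t ∈ Icc 0 S, ∀ x ∈ closure Ω, ∀ x' ∈ closure Ω, ∀ i j,
    |spatialDeriv2 f i j t x - spatialDeriv2 f i j t x'| ≤ ε * dist x x' ^ α) ∧
  (∀ x ∈ closure Ω, ∀ t ∈ Icc 0 S, ∀ t' ∈ Icc 0 S,
    |timeDeriv f t x - timeDeriv f t' x| ≤ ε * |t - t'| ^ (α / 2))

/-- `G`, `∂ₜG` and the `∂_{xᵢ}G` exist and are continuous on `[0,S] × cl Ω × ℝ`. -/
def C1InTX {n : ℕ} (Ω : Set (Fin n → ℝ)) (S : ℝ) (G : ℝ → (Fin n → ℝ) → ℝ → ℝ) : Prop :=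
  (∀ t ∈ Icc 0 S, ∀ x ∈ closure Ω, ∀ u : ℝ,
    DifferentiableAt ℝ (fun s => G s x u) t ∧
    ∀ i, DifferentiableAt ℝ (fun s => G t (Function.update x i s) u) (x i)) ∧
  ContinuousOn (fun p : ℝ × (Fin n → ℝ) × ℝ => G p.1 p.2.1 p.2.2)
    (Icc 0 S ×ˢ closure Ω ×ˢ (univ : Set ℝ)) ∧
  ContinuousOn (fun p : ℝ × (Fin n → ℝ) × ℝ => FtDeriv G p.1 p.2.1 p.2.2)
    (Icc 0 S ×ˢ closure Ω ×ˢ (univ : Set ℝ)) ∧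
  ∀ i, ContinuousOn (fun p : ℝ × (Fin n → ℝ) × ℝ => FxDeriv G i p.1 p.2.1 p.2.2)
    (Icc 0 S ×ˢ closure Ω ×ˢ (univ : Set ℝ))

/-- `G`, `∂ₜG` and the `∂_{xᵢ}G` are bounded by `κ(|u|)` on `[0,S] × cl Ω`, for every `u`. -/
def BoundedByKappa {n : ℕ} (Ω : Set (Fin n → ℝ)) (S : ℝ) (G : ℝ → (Fin n → ℝ) → ℝ → ℝ)
    (κ : ℝ → ℝ) : Prop :=
  ∀ u : ℝ, ∀ t ∈ Icc 0 S, ∀ x ∈ closure Ω,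
    |G t x u| ≤ κ |u| ∧ |FtDeriv G t x u| ≤ κ |u| ∧ ∀ i, |FxDeriv G i t x u| ≤ κ |u|

/-- The family of solutions of the semilinear problem with boundary data `λχ`, together with
its first and second linearizations in the boundary parameter `λ`. -/
structure SemilinearFamily {n : ℕ} (Ω : Set (Fin n → ℝ)) (S r : ℝ)
    (χ : ℝ → (Fin n → ℝ) → ℝ) (F : ℝ → (Fin n → ℝ) → ℝ → ℝ)
    (v v1 v2 : ℝ → ℝ → (Fin n → ℝ) → ℝ) : Prop where
  sol : ∀ lam ∈ Icc (-r) r, IsClassicalSolution Ω S (fun _ _ => (0 : ℝ))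
      (fun t x => -F t x (v lam t x)) (fun t x => lam * χ t x) (v lam)
  zero : ∀ t ∈ Icc 0 S, ∀ x ∈ closure Ω, v 0 t x = 0
  lin1 : ∀ lam ∈ Icc (-r) r, IsClassicalSolution Ω S
      (fun t x => uDeriv F t x (v lam t x)) (fun _ _ => (0 : ℝ)) χ (v1 lam)
  lin2 : ∀ lam ∈ Icc (-r) r, IsClassicalSolution Ω S
      (fun t x => uDeriv F t x (v lam t x))
      (fun t x => -uDeriv2 F t x (v lam t x) * (v1 lam t x) ^ 2) (fun _ _ => (0 : ℝ)) (v2 lam)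
  cont_lam : ∀ t ∈ Icc 0 S, ∀ x ∈ closure Ω, ContinuousOn (fun lam => v lam t x) (Icc (-r) r)
  deriv1 : ∀ t ∈ Icc 0 S, ∀ x ∈ closure Ω, ∀ lam ∈ Ioo (-r) r,
      HasDerivAt (fun μ => v μ t x) (v1 lam t x) lam
  deriv2 : ∀ t ∈ Icc 0 S, ∀ x ∈ closure Ω, ∀ lam ∈ Ioo (-r) r,
      HasDerivAt (fun μ => v1 μ t x) (v2 lam t x) lam

end

end Paper

open Paper Set
namespace Paper
open Filter Topology

lemma deriv_nonpos_of_left {f : ℝ → ℝ} {f' t : ℝ} (h : HasDerivAt f f' t)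
    (hm : ∀ᶠ s in 𝓝[<] t, f t ≤ f s) : f' ≤ 0 := by
  have h1 := (hasDerivAt_iff_tendsto_slope.1 h).mono_left
    (nhdsWithin_mono t (fun s (hs : s < t) => ne_of_lt hs) : 𝓝[<] t ≤ 𝓝[≠] t)
  refine le_of_tendsto h1 ?_
  filter_upwards [hm, self_mem_nhdsWithin] with s hs hst
  rw [slope_def_field]
  have : s - t < 0 := sub_neg.2 hst
  exact div_nonpos_of_nonneg_of_nonpos (by linarith) this.le

lemma second_deriv_nonneg {f : ℝ → ℝ} {a : ℝ} (hc : ContinuousAt f a) (hm : IsLocalMin f a) :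
    0 ≤ deriv (deriv f) a := by
  by_contra! hneg
  have h0 : deriv f a = 0 := hm.deriv_eq_zero
  have hmax : IsLocalMin (-f) a := by
    apply isLocalMin_of_deriv_deriv_pos
    · have : deriv (-f) = - deriv f := by ext x; simp [deriv.neg]
      rw [this, deriv.neg]; linarith
    · simp [deriv.neg, h0]
    · exact hc.neg
  have heq : f =ᶠ[𝓝 a] fun _ => f a := by
    filter_upwards [hm, hmax] with x h1 h2
    simp only [Pi.neg_apply] at h2
    linarith
  have h3 : deriv f =ᶠ[𝓝 a] fun _ => 0 := by
    have := heq.deriv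
    simpa using this
  have := h3.deriv_eq
  simp at this
  linarith

/-- squared Euclidean distance -/
def nsq {n : ℕ} (y x : Fin n → ℝ) : ℝ := ∑ i, (x i - y i) ^ 2

lemma nsq_cont {n : ℕ} (y : Fin n → ℝ) : Continuous (nsq y) := by
  unfold nsq; fun_prop

lemma nsq_nonneg {n : ℕ} (y x : Fin n → ℝ) : 0 ≤ nsq y x :=
  Finset.sum_nonneg fun _ _ => sq_nonneg _

lemma nsq_self {n : ℕ} (y : Fin n → ℝ) : nsq y y = 0 := by simp [nsq]

lemma abs_le_of_nsq {n : ℕ} {y x : Fin n → ℝ} {R : ℝ} (hR : 0 ≤ R) (h : nsq y x ≤ R ^ 2) :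
    dist x y ≤ R := by
  rw [dist_pi_le_iff hR]
  intro i
  rw [Real.dist_eq]
  apply abs_le_of_sq_le_sq _ hR
  refine le_trans ?_ h
  exact Finset.single_le_sum (f := fun i => (x i - y i) ^ 2) (fun _ _ => sq_nonneg _)
    (Finset.mem_univ i)

lemma nsq_update {n : ℕ} (y x : Fin n → ℝ) (i : Fin n) (s : ℝ) :
    nsq y (Function.update x i s) = nsq y x - (x i - y i) ^ 2 + (s - y i) ^ 2 := by
  unfold nsq
  rw [← Finset.add_sum_erase _ _ (Finset.mem_univ i),
    ← Finset.add_sum_erase (a := i) _ (fun i => (x i - y i) ^ 2) (Finset.mem_univ i)]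
  have : ∑ j ∈ Finset.univ.erase i, (Function.update x i s j - y j) ^ 2 =
      ∑ j ∈ Finset.univ.erase i, (x j - y j) ^ 2 := by
    apply Finset.sum_congr rfl
    intro j hj
    rw [Function.update_of_ne (Finset.ne_of_mem_erase hj)]
  rw [this]; simp; ring

lemma exists_small_nsq {n : ℕ} (y : Fin n → ℝ) {U : Set (Fin n → ℝ)} (hU : U ∈ 𝓝 y) :
    ∃ r > 0, ∀ x, nsq y x ≤ r ^ 2 → x ∈ U := by
  obtain ⟨r, hr, h⟩ := Metric.nhds_basis_closedBall.mem_iff.1 hU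
  exact ⟨r, hr, fun x hx => h (abs_le_of_nsq hr.le hx)⟩

lemma key {n : ℕ} {Ω : Set (Fin n → ℝ)} (hΩo : IsOpen Ω) {S : ℝ}
    {q : ℝ → (Fin n → ℝ) → ℝ} {C : ℝ} (hC : ∀ t ∈ Ioo 0 S, ∀ x ∈ Ω, |q t x| ≤ C)
    {w : ℝ → (Fin n → ℝ) → ℝ} (hreg : ParabolicRegular Ω S w)
    (heqn : ∀ t ∈ Ioo 0 S, ∀ x ∈ Ω,
      timeDeriv w t x - laplacian w t x + q t x * w t x = 0)
    (hw0 : ∀ t ∈ Icc 0 S, ∀ x ∈ closure Ω, 0 ≤ w t x)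
    {s : ℝ} (hs : s ∈ Ioo 0 S) {y : Fin n → ℝ} {R : ℝ} (hR : 0 < R)
    (hball : ∀ x, nsq y x ≤ R ^ 2 → x ∈ Ω) (hpos : 0 < w s y)
    {t1 : ℝ} (hst1 : s < t1) (ht1 : t1 ≤ S) {x1 : Fin n → ℝ} (hx1 : nsq y x1 < R ^ 2) :
    0 < w t1 x1 := by
  have hyΩ : y ∈ Ω := hball y (by rw [nsq_self]; positivity)
  have hC0 : 0 ≤ C := (abs_nonneg _).trans (hC s hs y hyΩ)
  -- small ball where w is bounded below at time s
  obtain ⟨r, hr, hrm⟩ : ∃ r > 0, ∀ x, nsq y x ≤ r ^ 2 → w s y / 2 < w s x := by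
    apply exists_small_nsq y (U := {x | w s y / 2 < w s x})
    have hsc : ContinuousAt (fun x => w s x) y := by
      have h1 : ContinuousAt (fun p : ℝ × (Fin n → ℝ) => w p.1 p.2) (s, y) :=
        hreg.cont.continuousAt (prod_mem_nhds (Icc_mem_nhds hs.1 hs.2)
          (mem_of_superset (hΩo.mem_nhds hyΩ) subset_closure))
      exact ContinuousAt.comp (f := fun x => (s, x)) (x := y) h1 (by fun_prop)
    exact hsc.eventually (lt_mem_nhds (by linarith))
  obtain ⟨ε, hε, hεr, hεR⟩ : ∃ ε > 0, ε ≤ r ^ 2 ∧ ε < R ^ 2 := by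
    refine ⟨min (r ^ 2) (R ^ 2 / 2), by positivity, min_le_left _ _, ?_⟩
    have := min_le_right (r ^ 2) (R ^ 2 / 2)
    have : 0 < R ^ 2 := by positivity
    linarith
  obtain ⟨a, ha, ha1⟩ : ∃ a > 0, ε + a * (t1 - s) = R ^ 2 := by
    have h1 : 0 < t1 - s := by linarith
    exact ⟨(R ^ 2 - ε) / (t1 - s), div_pos (by linarith) h1, by field_simp; ring⟩
  obtain ⟨K, hK⟩ : ∃ K : ℝ, K = 8 + 4 * n + 2 * a := ⟨_, rfl⟩
  obtain ⟨lam, hlam⟩ : ∃ lam : ℝ, lam * (16 * ε) = K ^ 2 :=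
    ⟨K ^ 2 / (16 * ε), by field_simp⟩
  obtain ⟨κ, hκ, hκε⟩ : ∃ κ > 0, κ * ε ^ 2 = w s y / 2 :=
    ⟨w s y / 2 / ε ^ 2, by positivity, by field_simp⟩
  let d : ℝ → (Fin n → ℝ) → ℝ := fun t x => ε + a * (t - s) - nsq y x
  let v : ℝ → (Fin n → ℝ) → ℝ := fun t x =>
    Real.exp (C * (t - s)) * w t x - κ * Real.exp (-lam * (t - s)) * (d t x) ^ 2
  have hdc : Continuous (fun p : ℝ × (Fin n → ℝ) => d p.1 p.2) := by
    have := nsq_cont y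
    simp only [d]; fun_prop
  have hvc : ContinuousOn (fun p : ℝ × (Fin n → ℝ) => v p.1 p.2) (Icc 0 S ×ˢ closure Ω) := by
    have := hreg.cont
    simp only [v]
    fun_prop
  by_contra! hcon
  have hx1Ω : x1 ∈ Ω := hball x1 hx1.le
  have ht1' : t1 ∈ Icc 0 S := ⟨by linarith [hs.1], ht1⟩
  have hv1 : v t1 x1 < 0 := by
    have h1 : d t1 x1 = R ^ 2 - nsq y x1 := by simp only [d]; rw [ha1]
    have h2 : 0 < d t1 x1 := by rw [h1]; linarith
    have h3 : Real.exp (C * (t1 - s)) * w t1 x1 ≤ 0 :=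
      mul_nonpos_of_nonneg_of_nonpos (Real.exp_pos _).le hcon
    have h4 : 0 < κ * Real.exp (-lam * (t1 - s)) * (d t1 x1) ^ 2 := by positivity
    simp only [v]; linarith
  have hd1 : 0 < d t1 x1 := by
    have h1 : d t1 x1 = R ^ 2 - nsq y x1 := by simp only [d]; rw [ha1]
    rw [h1]; linarith
  -- a slightly earlier time
  obtain ⟨t', hst', ht't1, hv', hd'⟩ : ∃ t', s < t' ∧ t' < t1 ∧ v t' x1 < 0 ∧ 0 < d t' x1 := by
    have hv2 : ContinuousWithinAt (fun t => v t x1) (Icc 0 S) t1 :=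
      ContinuousWithinAt.comp (f := fun t => (t, x1)) (t := Icc 0 S ×ˢ closure Ω)
        (hvc (t1, x1) ⟨ht1', subset_closure hx1Ω⟩) (by fun_prop)
        (fun t ht => ⟨ht, subset_closure hx1Ω⟩)
    have hv3 : ContinuousWithinAt (fun t => v t x1) (Ioo s t1) t1 :=
      hv2.mono (fun t ht => ⟨by linarith [hs.1, ht.1], by linarith [ht.2]⟩)
    have hd2 : ContinuousWithinAt (fun t => d t x1) (Ioo s t1) t1 :=
      (hdc.comp (by fun_prop : Continuous fun t => (t, x1))).continuousWithinAt
    have hne : (𝓝[Ioo s t1] t1).NeBot := by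
      rw [nhdsWithin_Ioo_eq_nhdsLT hst1]; infer_instance
    have := (hv3.eventually (gt_mem_nhds hv1)).and
      ((hd2.eventually (lt_mem_nhds hd1)).and self_mem_nhdsWithin)
    obtain ⟨t', h1, h2, h3⟩ := this.exists
    exact ⟨t', h3.1, h3.2, h1, h2⟩
  -- compact region
  let D : Set (ℝ × (Fin n → ℝ)) := {p | p.1 ∈ Icc s t' ∧ 0 ≤ d p.1 p.2}
  have hDΩ : ∀ p ∈ D, p.1 ∈ Ioo 0 S ∧ nsq y p.2 ≤ R ^ 2 ∧ p.2 ∈ Ω := by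
    rintro ⟨t, x⟩ ⟨⟨h1, h2⟩, h3⟩
    simp only at h1 h2 h3
    have h4 : nsq y x ≤ R ^ 2 := by
      have : a * (t - s) ≤ a * (t1 - s) := by
        apply mul_le_mul_of_nonneg_left _ ha.le; linarith
      simp only [d] at h3; linarith
    exact ⟨⟨by linarith [hs.1], by simp only; linarith⟩, h4, hball x h4⟩
  have hDcomp : IsCompact D := by
    apply IsCompact.of_isClosed_subset
      (isCompact_Icc.prod (isCompact_closedBall y R) : IsCompact (Icc s t' ×ˢ Metric.closedBall y R))
    · exact (isClosed_Icc.preimage continuous_fst).inter (isClosed_le continuous_const hdc)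
    · intro p hp
      exact ⟨hp.1, abs_le_of_nsq hR.le (hDΩ p hp).2.1⟩
  obtain ⟨⟨t, x⟩, hpD, hmin⟩ := hDcomp.exists_isMinOn (f := fun p => v p.1 p.2)
    ⟨(t', x1), ⟨⟨hst'.le, le_rfl⟩, hd'.le⟩⟩
    (hvc.mono fun p hp => ⟨Ioo_subset_Icc_self (hDΩ p hp).1, subset_closure (hDΩ p hp).2.2⟩)
  obtain ⟨htS, hxR, hxΩ⟩ := hDΩ _ hpD
  simp only at htS hxR hxΩ
  have hmin' : ∀ τ ∈ Icc s t', ∀ z, 0 ≤ d τ z → v t x ≤ v τ z := by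
    intro τ hτ z hz
    exact hmin (show (τ, z) ∈ D from ⟨hτ, hz⟩)
  have hvneg : v t x < 0 := (hmin' t' ⟨hst'.le, le_rfl⟩ x1 hd'.le).trans_lt hv'
  have hwx : 0 ≤ w t x := hw0 t (Ioo_subset_Icc_self htS) x (subset_closure hxΩ)
  have hd0 : 0 ≤ d t x := hpD.2
  have hdpos : 0 < d t x := by
    rcases hd0.eq_or_lt with h | h
    · exfalso
      have : v t x = Real.exp (C * (t - s)) * w t x := by simp only [v]; rw [← h]; ring
      have : 0 ≤ v t x := by rw [this]; positivity
      linarith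
    · exact h
  have hst : s < t := by
    rcases (hpD.1.1 : s ≤ t).eq_or_lt with h | h
    · exfalso
      subst h
      have h1 : d s x ≤ ε := by simp only [d]; linarith [nsq_nonneg y x]
      have h2 : nsq y x ≤ r ^ 2 := by
        simp only [d] at hd0; linarith
      have h3 := hrm x h2
      have h4 : v s x = w s x - κ * (d s x) ^ 2 := by simp [v]
      have h5 : κ * (d s x) ^ 2 ≤ κ * ε ^ 2 := by gcongr
      linarith
    · exact h
  have htt' : t ≤ t' := hpD.1.2
  set E := Real.exp (C * (t - s)) with hE
  set G := κ * Real.exp (-lam * (t - s)) with hG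
  have hEpos : 0 < E := Real.exp_pos _
  have hGpos : 0 < G := by positivity
  -- time derivative
  have htime : E * (C * w t x + timeDeriv w t x) - G * (-lam * d t x ^ 2 + 2 * d t x * a) ≤ 0 := by
    have hw : HasDerivAt (fun τ => w τ x) (timeDeriv w t x) t :=
      (hreg.diff_t t htS x hxΩ).hasDerivAt
    have hlin : HasDerivAt (fun τ : ℝ => τ - s) 1 t := (hasDerivAt_id t).sub_const s
    have hdd : HasDerivAt (fun τ => d τ x) (a * 1) t :=
      ((hlin.const_mul a).const_add ε).sub_const _
    have h1 : HasDerivAt (fun τ => v τ x) _ t :=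
      ((hlin.const_mul C).exp.mul hw).sub
        (((hlin.const_mul (-lam)).exp.const_mul κ).mul (hdd.pow 2))
    have h2 := deriv_nonpos_of_left h1 (by
      have e1 : ∀ᶠ τ in 𝓝[<] t, 0 < d τ x :=
        (hdd.continuousAt.eventually (lt_mem_nhds hdpos)).filter_mono nhdsWithin_le_nhds
      have e2 : ∀ᶠ τ in 𝓝[<] t, s < τ := (lt_mem_nhds hst).filter_mono nhdsWithin_le_nhds
      filter_upwards [e1, e2, self_mem_nhdsWithin] with τ h3 h4 h5
      exact hmin' τ ⟨h4.le, (le_of_lt h5).trans htt'⟩ x h3.le)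
    refine le_of_eq_of_le ?_ h2
    simp only [hE, hG, Pi.mul_apply, Pi.pow_apply]
    ring
  -- space derivatives
  have hspace : ∀ i, G * (8 * (x i - y i) ^ 2 - 4 * d t x) ≤ E * spatialDeriv2 w i i t x := by
    intro i
    let f : ℝ → ℝ := fun σ => w t (Function.update x i σ)
    let g : ℝ → ℝ := fun σ => d t (Function.update x i σ)
    have hupd : Continuous (fun σ : ℝ => Function.update x i σ) :=
      continuous_const.update i continuous_id
    have hxi : Function.update x i (x i) = x := Function.update_eq_self i x
    have hevΩ : ∀ᶠ σ in 𝓝 (x i), Function.update x i σ ∈ Ω := by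
      apply hupd.continuousAt.eventually
      show ∀ᶠ u in 𝓝 (Function.update x i (x i)), u ∈ Ω
      rw [hxi]; exact hΩo.mem_nhds hxΩ
    have hfd : ∀ σ, deriv f σ = spatialDeriv w i t (Function.update x i σ) := by
      intro σ
      simp [spatialDeriv, f]
    have hfdiff : ∀ᶠ σ in 𝓝 (x i), DifferentiableAt ℝ f σ := by
      filter_upwards [hevΩ] with σ hσ
      have := hreg.diff_x t htS _ hσ i
      simpa [f] using this
    have hgd : ∀ σ, HasDerivAt g (-2 * (σ - y i)) σ := by
      intro σ
      have h1 : g = fun σ => (ε + a * (t - s) - (nsq y x - (x i - y i) ^ 2)) - (σ - y i) ^ 2 := by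
        ext σ; simp only [g, d, nsq_update]; ring
      rw [h1]
      have h2 := ((((hasDerivAt_id σ).sub_const (y i)).pow 2).const_sub
        (ε + a * (t - s) - (nsq y x - (x i - y i) ^ 2)))
      refine h2.congr_deriv ?_
      simp only [id]; ring
    have hgx : g (x i) = d t x := by simp only [g, hxi]
    let F : ℝ → ℝ := fun σ => E * f σ - G * g σ ^ 2
    have hFv : ∀ σ, F σ = v t (Function.update x i σ) := fun σ => rfl
    have hF1 : ∀ᶠ σ in 𝓝 (x i), deriv F σ =
        E * deriv f σ - G * (2 * g σ * (-2 * (σ - y i))) := by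
      filter_upwards [hfdiff] with σ hσ
      have := (hσ.hasDerivAt.const_mul E).sub (((hgd σ).pow 2).const_mul G)
      have h3 : HasDerivAt F _ σ := this
      rw [h3.deriv]; simp
    have hF2 : deriv (deriv F) (x i) =
        E * spatialDeriv2 w i i t x - G * (8 * (x i - y i) ^ 2 - 4 * d t x) := by
      rw [EventuallyEq.deriv_eq hF1]
      have h1 : HasDerivAt (deriv f) (spatialDeriv2 w i i t x) (x i) := by
        have := (hreg.diff_xx t htS x hxΩ i i).hasDerivAt
        rw [funext hfd]
        exact this
      have h2 : HasDerivAt (fun σ => -2 * (σ - y i)) (-2 * 1) (x i) :=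
        ((hasDerivAt_id (x i)).sub_const (y i)).const_mul (-2)
      have h3 := (h1.const_mul E).sub ((((hgd (x i)).const_mul 2).mul h2).const_mul G)
      have h4 : HasDerivAt (fun σ => E * deriv f σ - G * (2 * g σ * (-2 * (σ - y i)))) _ (x i) := h3
      rw [h4.deriv, hgx]; ring
    have hFc : ContinuousAt F (x i) := by
      have h1 : ContinuousAt f (x i) := hfdiff.self_of_nhds.continuousAt
      have h2 : ContinuousAt g (x i) := (hgd (x i)).continuousAt
      exact (h1.const_mul E).sub ((h2.pow 2).const_mul G)
    have hFmin : IsLocalMin F (x i) := by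
      have e1 : ∀ᶠ σ in 𝓝 (x i), 0 < g σ :=
        (hgd (x i)).continuousAt.eventually (lt_mem_nhds (by rw [hgx]; exact hdpos))
      filter_upwards [e1] with σ hσ
      rw [hFv, hFv, hxi]
      exact hmin' t hpD.1 _ hσ.le
    have := second_deriv_nonneg hFc hFmin
    rw [hF2] at this
    linarith
  have hlap : G * (8 * nsq y x - 4 * n * d t x) ≤ E * laplacian w t x := by
    have h1 := Finset.sum_le_sum (s := Finset.univ) (fun i _ => hspace i)
    rw [← Finset.mul_sum, ← Finset.mul_sum, Finset.sum_sub_distrib, ← Finset.mul_sum] at h1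
    simp only [Finset.sum_const, Finset.card_univ, Fintype.card_fin, nsmul_eq_mul] at h1
    have h2 : (n : ℝ) * (4 * d t x) = 4 * n * d t x := by ring
    rw [h2] at h1
    exact h1
  have heq := heqn t htS x hxΩ
  have hq := (abs_le.1 (hC t htS x hxΩ)).2
  have h1 : 0 ≤ E * ((C - q t x) * w t x) :=
    mul_nonneg hEpos.le (mul_nonneg (by linarith) hwx)
  have h2 : E * timeDeriv w t x = E * laplacian w t x - E * (q t x * w t x) := by
    rw [← mul_sub]; congr 1; linarith
  have h3 : G * (8 * nsq y x - 4 * n * d t x + lam * d t x ^ 2 - 2 * d t x * a) ≤ 0 := by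
    linarith
  have h4 : 8 * nsq y x - 4 * n * d t x + lam * d t x ^ 2 - 2 * d t x * a ≤ 0 := by
    by_contra! h
    have := mul_pos hGpos h
    linarith
  have h5 : ε - d t x ≤ nsq y x := by
    have : 0 ≤ a * (t - s) := mul_nonneg ha.le (by linarith)
    simp only [d]; linarith
  have h6 : 8 * ε - K * d t x + lam * d t x ^ 2 ≤ 0 := by
    rw [hK]; linarith
  have h7 : (16 * ε) * (8 * ε - K * d t x + lam * d t x ^ 2) ≤ 0 :=
    mul_nonpos_of_nonneg_of_nonpos (by positivity) h6
  have h8 : (16 * ε) * (8 * ε - K * d t x + lam * d t x ^ 2) =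
      (K * d t x - 8 * ε) ^ 2 + 64 * ε ^ 2 := by
    have : (16 * ε) * (8 * ε - K * d t x + lam * d t x ^ 2) =
      128 * ε ^ 2 - 16 * ε * K * d t x + (lam * (16 * ε)) * d t x ^ 2 := by ring
    rw [this, hlam]; ring
  have h9 : 0 < (K * d t x - 8 * ε) ^ 2 + 64 * ε ^ 2 := by positivity
  linarith

end Paper

open Topology in
/-- strict positivity of the infimum: if `w ≥ 0` solves
`∂ₜw − Δw + q w = 0` in `(0,S) × Ω`, vanishes at `t = 0` and equals the constant `δ₂ > 0` on
`[δ₁,S] × ∂Ω`, then the infimum of `w` over `[δ₁,S] × cl Ω` is strictly positive. -/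
theorem statement2 {n : ℕ} (hn : 2 ≤ n) (Ω : Set (Fin n → ℝ)) (hΩo : IsOpen Ω)
    (hΩb : Bornology.IsBounded Ω) (hΩc : IsConnected Ω)
    (S δ₁ δ₂ : ℝ) (hS : 0 < S) (hδ₁ : 0 < δ₁) (hδ₁S : δ₁ < S) (hδ₂ : 0 < δ₂)
    (q : ℝ → (Fin n → ℝ) → ℝ)
    (hqc : ContinuousOn (fun p : ℝ × (Fin n → ℝ) => q p.1 p.2) (Ioo 0 S ×ˢ Ω))
    (hqb : ∃ C, ∀ t ∈ Ioo 0 S, ∀ x ∈ Ω, |q t x| ≤ C)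
    (w : ℝ → (Fin n → ℝ) → ℝ)
    (hreg : ParabolicRegular Ω S w)
    (heqn : ∀ t ∈ Ioo 0 S, ∀ x ∈ Ω,
      timeDeriv w t x - laplacian w t x + q t x * w t x = 0)
    (hw0 : ∀ t ∈ Icc 0 S, ∀ x ∈ closure Ω, 0 ≤ w t x)
    (hinit : ∀ x ∈ closure Ω, w 0 x = 0)
    (hlat : ∀ t ∈ Icc δ₁ S, ∀ x ∈ frontier Ω, w t x = δ₂) :
    0 < sInf ((fun p : ℝ × (Fin n → ℝ) => w p.1 p.2) '' (Icc δ₁ S ×ˢ closure Ω)) := by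
  classical
  obtain ⟨C, hC⟩ := hqb
  have hcl : IsCompact (closure Ω) := hΩb.isCompact_closure
  have : Nonempty (Fin n) := ⟨⟨0, by omega⟩⟩
  -- a frontier point
  obtain ⟨z, hz⟩ : (frontier Ω).Nonempty := by
    rw [nonempty_frontier_iff]
    refine ⟨hΩc.nonempty, ?_⟩
    rintro rfl
    exact NormedSpace.unbounded_univ ℝ (Fin n → ℝ) hΩb
  have hzc : z ∈ closure Ω := frontier_subset_closure hz
  -- starting point
  obtain ⟨s0, y0, hs0, hs0δ, hy0, hpos0⟩ :
      ∃ s0 y0, 0 < s0 ∧ s0 < δ₁ ∧ y0 ∈ Ω ∧ 0 < w s0 y0 := by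
    have hwz : 0 < w δ₁ z := by rw [hlat δ₁ ⟨le_rfl, hδ₁S.le⟩ z hz]; exact hδ₂
    have h1 := (hreg.cont (δ₁, z) ⟨⟨hδ₁.le, hδ₁S.le⟩, hzc⟩).eventually
      (lt_mem_nhds hwz)
    rw [nhdsWithin_prod_eq] at h1
    have hle : 𝓝[Ioo 0 δ₁] δ₁ ×ˢ 𝓝[Ω] z ≤ 𝓝[Icc 0 S] δ₁ ×ˢ 𝓝[closure Ω] z :=
      Filter.prod_mono (nhdsWithin_mono _ fun t ht => ⟨ht.1.le, by linarith [ht.2]⟩)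
        (nhdsWithin_mono _ subset_closure)
    have hne : (𝓝[Ioo 0 δ₁] δ₁).NeBot := by
      rw [nhdsWithin_Ioo_eq_nhdsLT hδ₁]; infer_instance
    have hne2 : (𝓝[Ω] z).NeBot := mem_closure_iff_nhdsWithin_neBot.1 hzc
    have h2 := (h1.filter_mono hle).and
      (Filter.prod_mem_prod (self_mem_nhdsWithin (s := Ioo 0 δ₁) (a := δ₁))
        (self_mem_nhdsWithin (s := Ω) (a := z)))
    obtain ⟨⟨a, b⟩, h3, h4, h5⟩ := h2.exists
    exact ⟨a, b, h4.1, h4.2, h5, h3⟩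
  have hball : ∀ x ∈ Ω, ∃ R > 0, ∀ u, nsq x u ≤ R ^ 2 → u ∈ Ω := fun x hx =>
    exists_small_nsq x (hΩo.mem_nhds hx)
  let P : Set (Fin n → ℝ) := {x | x ∈ Ω ∧ ∀ t, s0 < t → t ≤ S → 0 < w t x}
  -- propagation
  have hprop : ∀ x ∈ P, ∀ R > 0, (∀ u, nsq x u ≤ R ^ 2 → u ∈ Ω) →
      ∀ u, nsq x u < R ^ 2 → u ∈ P := by
    intro x hx R hR hB u hu
    refine ⟨hB u hu.le, fun t ht htS => ?_⟩
    exact key hΩo hC hreg heqn hw0 (s := (s0 + t) / 2) ⟨by linarith, by linarith⟩ hR hB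
      (hx.2 _ (by linarith) (by linarith)) (by linarith) htS hu
  have hPo : IsOpen P := by
    rw [isOpen_iff_mem_nhds]
    intro x hx
    obtain ⟨R, hR, hB⟩ := hball x hx.1
    have : {u | nsq x u < R ^ 2} ∈ 𝓝 x :=
      (isOpen_lt (nsq_cont x) continuous_const).mem_nhds (by
        simp only [mem_setOf_eq, nsq_self]; positivity)
    exact Filter.mem_of_superset this (fun u hu => hprop x hx R hR hB u hu)
  have hPne : (Ω ∩ P).Nonempty := by
    obtain ⟨R, hR, hB⟩ := hball y0 hy0
    refine ⟨y0, hy0, hy0, fun t ht htS => ?_⟩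
    exact key hΩo hC hreg heqn hw0 ⟨hs0, by linarith⟩ hR hB hpos0 ht htS
      (by rw [nsq_self]; positivity)
  have hPcl : closure P ∩ Ω ⊆ P := by
    rintro x ⟨hxc, hxΩ⟩
    obtain ⟨r, hr, hB⟩ := Metric.nhds_basis_closedBall.mem_iff.1 (hΩo.mem_nhds hxΩ)
    have hR : 0 < r / 2 := by positivity
    have hN : {u | nsq x u < (r / 2) ^ 2} ∈ 𝓝 x :=
      (isOpen_lt (nsq_cont x) continuous_const).mem_nhds (by
        simp only [mem_setOf_eq, nsq_self]; positivity)
    obtain ⟨u, hu1, hu2⟩ := mem_closure_iff_nhds.1 hxc _ hN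
    have hu1' : nsq x u < (r / 2) ^ 2 := hu1
    refine hprop u hu2 (r / 2) hR (fun v hv => hB ?_) x ?_
    · have h1 := abs_le_of_nsq hR.le hv
      have h2 := abs_le_of_nsq hR.le hu1'.le
      rw [Metric.mem_closedBall]
      linarith [dist_triangle v u x]
    · have : nsq u x = nsq x u := Finset.sum_congr rfl fun i _ => by ring
      rw [this]; exact hu1'
  have hΩP : Ω ⊆ P := hΩc.isPreconnected.subset_of_closure_inter_subset hPo hPne hPcl
  have hallpos : ∀ t ∈ Icc δ₁ S, ∀ x ∈ closure Ω, 0 < w t x := by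
    intro t ht x hx
    by_cases hxΩ : x ∈ Ω
    · exact (hΩP hxΩ).2 t (by linarith [ht.1]) ht.2
    · rw [hlat t ht x ⟨hx, by rwa [hΩo.interior_eq]⟩]; exact hδ₂
  have hK : IsCompact (Icc δ₁ S ×ˢ closure Ω) := isCompact_Icc.prod hcl
  have hKne : (Icc δ₁ S ×ˢ closure Ω).Nonempty := ⟨(δ₁, z), ⟨le_rfl, hδ₁S.le⟩, hzc⟩
  have hcont : ContinuousOn (fun p : ℝ × (Fin n → ℝ) => w p.1 p.2) (Icc δ₁ S ×ˢ closure Ω) :=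
    hreg.cont.mono (prod_mono (Icc_subset_Icc_left hδ₁.le) subset_rfl)
  obtain ⟨p, hp, hpe⟩ := (hK.image_of_continuousOn hcont).sInf_mem (hKne.image _)
  rw [← hpe]
  exact hallpos p.1 hp.1 p.2 hp.2
end

section
/- Let S > 0, r > 0, and let χ : [0,S] × ∂Ω → [0,∞) be continuous. For each λ ∈ [−r,r], let V_λ : (0,S) × Ω → ℝ be continuous and bounded, and let v⁽¹⁾_λ be a classical solution of ∂_t u − Δu + V_λ u = 0 in (0,S) × Ω with lateral boundary values χ and zero initial values. Let (v_λ)_{λ∈[−r,r]} be functions on [0,S] × cl(Ω) with v_0 ≡ 0 such that, for each (t,x) ∈ [0,S] × cl(Ω), the map λ ↦ v_λ(t,x) is continuous on [−r,r] and differentiable on (−r,r) with derivative v⁽¹⁾_λ(t,x). Then, for all (t,x) ∈ [0,S] × cl(Ω), v_λ(t,x) ≥ 0 for every λ ∈ [0,r] and v_λ(t,x) ≤ 0 for every λ ∈ [−r,0]. -/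
open Set

open Paper Set
theorem aux_second_deriv {f : ℝ → ℝ} {a : ℝ} (hf : ContinuousAt f a) (h : IsLocalMin f a) :
    0 ≤ deriv (deriv f) a := by
  by_contra hneg
  push Not at hneg
  have hmax := isLocalMax_of_deriv_deriv_neg hneg h.deriv_eq_zero hf
  have hc : f =ᶠ[nhds a] fun _ => f a := by
    filter_upwards [h, hmax] with y h1 h2
    exact le_antisymm h2 h1
  have h2 := hc.deriv.deriv_eq
  simp at h2
  linarith

theorem aux_min {g : ℝ → ℝ} {g' t : ℝ} (ht : 0 < t) (hg : HasDerivAt g g' t)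
    (h : ∀ s ∈ Icc 0 t, g t ≤ g s) : g' ≤ 0 := by
  have hl : IsLocalMinOn g (Icc 0 t) t := (isMinOn_iff.2 h).localize
  have hm : (0 - t) ∈ posTangentConeAt (Icc 0 t) t := by
    apply sub_mem_posTangentConeAt_of_segment_subset
    rw [segment_symm, segment_eq_Icc ht.le]
  have := hl.hasFDerivWithinAt_nonneg hg.hasFDerivAt.hasFDerivWithinAt hm
  simp at this
  nlinarith

theorem aux_maxprinciple {n : ℕ} (Ω : Set (Fin n → ℝ)) (hΩo : IsOpen Ω)
    (hΩb : Bornology.IsBounded Ω) (S : ℝ) (χ : ℝ → (Fin n → ℝ) → ℝ)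
    (hχ0 : ∀ t ∈ Icc 0 S, ∀ x ∈ frontier Ω, 0 ≤ χ t x)
    (V u : ℝ → (Fin n → ℝ) → ℝ) (C : ℝ) (hC : ∀ t ∈ Ioo 0 S, ∀ x ∈ Ω, |V t x| ≤ C)
    (hu : IsClassicalSolution Ω S V (fun _ _ => (0 : ℝ)) χ u) :
    ∀ t ∈ Ico 0 S, ∀ x ∈ closure Ω, 0 ≤ u t x := by
  intro T hT x hx
  by_contra hneg
  push Not at hneg
  have hK : IsCompact (Icc 0 T ×ˢ closure Ω) :=
    isCompact_Icc.prod hΩb.isCompact_closure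
  have hcu : ContinuousOn (fun p : ℝ × (Fin n → ℝ) => Real.exp (-(C + 1) * p.1) * u p.1 p.2)
      (Icc 0 T ×ˢ closure Ω) := by
    apply ContinuousOn.mul (by fun_prop)
    exact hu.cont.mono (prod_mono (Icc_subset_Icc_right hT.2.le) subset_rfl)
  have hTx : (T, x) ∈ Icc 0 T ×ˢ closure Ω := ⟨⟨hT.1, le_rfl⟩, hx⟩
  obtain ⟨⟨t0, x0⟩, ⟨ht0, hx0⟩, hmin⟩ := hK.exists_isMinOn ⟨_, hTx⟩ hcu
  rw [isMinOn_iff] at hmin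
  simp only at ht0 hx0 hmin
  have hlt : u t0 x0 < 0 := by
    have h1 := hmin _ hTx
    have h2 : Real.exp (-(C + 1) * T) * u T x < 0 := mul_neg_of_pos_of_neg (Real.exp_pos _) hneg
    by_contra h3
    push Not at h3
    have := mul_nonneg (Real.exp_pos (-(C + 1) * t0)).le h3
    simp only at h1
    linarith
  have ht0S : t0 ∈ Icc 0 S := ⟨ht0.1, ht0.2.trans hT.2.le⟩
  have htpos : 0 < t0 := by
    rcases ht0.1.lt_or_eq with h | h
    · exact h
    · rw [← h, hu.initial x0 hx0] at hlt
      exact absurd hlt (lt_irrefl _)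
  have hxΩ : x0 ∈ Ω := by
    by_contra hxn
    have hf : x0 ∈ frontier Ω := by
      rw [hΩo.frontier_eq]
      exact ⟨hx0, hxn⟩
    have := hχ0 t0 ht0S x0 hf
    rw [← hu.lateral t0 ht0S x0 hf] at this
    linarith
  have htS : t0 ∈ Ioo 0 S := ⟨htpos, ht0.2.trans_lt hT.2⟩
  -- time derivative
  have hdt : HasDerivAt (fun s => u s x0) (timeDeriv u t0 x0) t0 :=
    (hu.diff_t t0 htS x0 hxΩ).hasDerivAt
  have hde : HasDerivAt (fun s : ℝ => Real.exp (-(C + 1) * s))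
      (Real.exp (-(C + 1) * t0) * (-(C + 1))) t0 := by
    have := ((hasDerivAt_id t0).const_mul (-(C + 1))).exp
    simpa using this
  have htime := aux_min htpos (hde.mul hdt) (fun s hs => by
    simpa using hmin (s, x0) ⟨⟨hs.1, hs.2.trans ht0.2⟩, hx0⟩)
  have htime' : timeDeriv u t0 x0 ≤ (C + 1) * u t0 x0 := by
    have he := Real.exp_pos (-(C + 1) * t0)
    by_contra h
    push Not at h
    nlinarith [mul_pos he (sub_pos.2 h)]
  -- Laplacian
  have hlap : 0 ≤ laplacian u t0 x0 := by
    apply Finset.sum_nonneg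
    intro i _
    have heq : spatialDeriv2 u i i t0 x0
        = deriv (deriv (fun s => u t0 (Function.update x0 i s))) (x0 i) := by
      unfold spatialDeriv2
      unfold spatialDeriv
      simp
    rw [heq]
    apply aux_second_deriv (hu.diff_x t0 htS x0 hxΩ i).continuousAt
    have hc : ContinuousAt (fun s : ℝ => Function.update x0 i s) (x0 i) := by
      apply Continuous.continuousAt
      exact continuous_const.update i continuous_id
    have hmem : ∀ᶠ s in nhds (x0 i), Function.update x0 i s ∈ Ω := by
      apply hc.eventually_mem
      simpa using hΩo.mem_nhds hxΩ
    filter_upwards [hmem] with s hs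
    have := hmin (t0, Function.update x0 i s) ⟨ht0, subset_closure hs⟩
    simp only [Function.update_eq_self]
    exact le_of_mul_le_mul_left this (Real.exp_pos _)
  have heqn := hu.eqn t0 htS x0 hxΩ
  have hV := abs_le.1 (hC t0 htS x0 hxΩ)
  nlinarith

theorem aux_nonneg {n : ℕ} (Ω : Set (Fin n → ℝ)) (hΩo : IsOpen Ω)
    (hΩb : Bornology.IsBounded Ω) (S : ℝ) (hS : 0 < S) (χ : ℝ → (Fin n → ℝ) → ℝ)
    (hχ0 : ∀ t ∈ Icc 0 S, ∀ x ∈ frontier Ω, 0 ≤ χ t x)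
    (V u : ℝ → (Fin n → ℝ) → ℝ) (C : ℝ) (hC : ∀ t ∈ Ioo 0 S, ∀ x ∈ Ω, |V t x| ≤ C)
    (hu : IsClassicalSolution Ω S V (fun _ _ => (0 : ℝ)) χ u) :
    ∀ t ∈ Icc 0 S, ∀ x ∈ closure Ω, 0 ≤ u t x := by
  intro t ht x hx
  have hc : ContinuousOn (fun s => u s x) (Icc 0 S) :=
    hu.cont.comp (f := fun s : ℝ => (s, x)) (by fun_prop) (fun s hs => ⟨hs, hx⟩)
  have hcl : closure (Ico 0 S) = Icc 0 S := closure_Ico hS.ne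
  rw [← hcl] at hc ht
  exact le_on_closure (f := fun _ => (0 : ℝ)) (g := fun s => u s x)
    (fun s hs => aux_maxprinciple Ω hΩo hΩb S χ hχ0 V u C hC hu s hs x hx)
    continuousOn_const hc ht

/-- sign of the solutions `v_λ`: if for each `λ ∈ [−r,r]` the function
`v⁽¹⁾_λ` solves the linear problem with potential `V_λ` and nonnegative boundary data `χ`,
`v_0 ≡ 0`, and `λ ↦ v_λ(t,x)` is continuous on `[−r,r]` and differentiable on `(−r,r)` with
derivative `v⁽¹⁾_λ(t,x)`, then `v_λ ≥ 0` for `λ ∈ [0,r]` and `v_λ ≤ 0` for `λ ∈ [−r,0]`. -/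
theorem statement3 {n : ℕ} (hn : 2 ≤ n) (Ω : Set (Fin n → ℝ)) (hΩo : IsOpen Ω)
    (hΩb : Bornology.IsBounded Ω) (hΩc : IsConnected Ω)
    (S r : ℝ) (hS : 0 < S) (hr : 0 < r)
    (χ : ℝ → (Fin n → ℝ) → ℝ)
    (hχc : ContinuousOn (fun p : ℝ × (Fin n → ℝ) => χ p.1 p.2) (Icc 0 S ×ˢ frontier Ω))
    (hχ0 : ∀ t ∈ Icc 0 S, ∀ x ∈ frontier Ω, 0 ≤ χ t x)
    (V : ℝ → ℝ → (Fin n → ℝ) → ℝ)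
    (v v1 : ℝ → ℝ → (Fin n → ℝ) → ℝ)
    (hVc : ∀ lam ∈ Icc (-r) r,
      ContinuousOn (fun p : ℝ × (Fin n → ℝ) => V lam p.1 p.2) (Ioo 0 S ×ˢ Ω))
    (hVb : ∀ lam ∈ Icc (-r) r, ∃ C, ∀ t ∈ Ioo 0 S, ∀ x ∈ Ω, |V lam t x| ≤ C)
    (hv1 : ∀ lam ∈ Icc (-r) r,
      IsClassicalSolution Ω S (V lam) (fun _ _ => (0 : ℝ)) χ (v1 lam))
    (hv0 : ∀ t ∈ Icc 0 S, ∀ x ∈ closure Ω, v 0 t x = 0)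
    (hcont : ∀ t ∈ Icc 0 S, ∀ x ∈ closure Ω,
      ContinuousOn (fun lam => v lam t x) (Icc (-r) r))
    (hderiv : ∀ t ∈ Icc 0 S, ∀ x ∈ closure Ω, ∀ lam ∈ Ioo (-r) r,
      HasDerivAt (fun μ => v μ t x) (v1 lam t x) lam) :
    ∀ t ∈ Icc 0 S, ∀ x ∈ closure Ω,
      (∀ lam ∈ Icc (0 : ℝ) r, 0 ≤ v lam t x) ∧ (∀ lam ∈ Icc (-r) (0 : ℝ), v lam t x ≤ 0) := by
  intro t ht x hx
  have hmono : MonotoneOn (fun lam => v lam t x) (Icc (-r) r) := by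
    apply monotoneOn_of_deriv_nonneg (convex_Icc _ _) (hcont t ht x hx)
    · rw [interior_Icc]
      exact fun lam hl => (hderiv t ht x hx lam hl).differentiableAt.differentiableWithinAt
    · rw [interior_Icc]
      intro lam hl
      rw [(hderiv t ht x hx lam hl).deriv]
      have hl' := Ioo_subset_Icc_self hl
      obtain ⟨C, hC⟩ := hVb lam hl'
      exact aux_nonneg Ω hΩo hΩb S hS χ hχ0 (V lam) (v1 lam) C hC (hv1 lam hl') t ht x hx
  have h0 : (0 : ℝ) ∈ Icc (-r) r := ⟨by linarith, hr.le⟩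
  have hz := hv0 t ht x hx
  constructor
  · intro lam hl
    have := hmono h0 ⟨by linarith [hl.1], hl.2⟩ hl.1
    simp only [hz] at this
    exact this
  · intro lam hl
    have := hmono ⟨hl.1, by linarith [hl.2]⟩ h0 hl.2
    simp only [hz] at this
    exact this
end

section
/- Let S > 0, 0 < δ₁ < S, δ₂ > 0, and let χ : [0,S] × ∂Ω → [0,∞) be continuous with χ(t,x) = δ₂ for all (t,x) ∈ [δ₁,S] × ∂Ω. Let q, V : (0,S) × Ω → ℝ be continuous and bounded with V(t,x) ≤ q(t,x) for all (t,x) ∈ (0,S) × Ω. Let w be a classical solution of ∂_t w − Δw + q w = 0 in (0,S) × Ω with lateral boundary values χ and zero initial values, and let v be a classical solution of ∂_t v − Δv + V v = 0 in (0,S) × Ω with lateral boundary values χ and zero initial values. Then the constant a₁ := inf { w(t,x) : (t,x) ∈ [δ₁,S] × cl(Ω) } is strictly positive and v(t,x) ≥ a₁ for all (t,x) ∈ [δ₁,S] × cl(Ω). -/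
open Set

open Paper Set

open Topology Filter in
def D2At (g : ℝ → ℝ) (s b : ℝ) : Prop :=
  ∃ g' : ℝ → ℝ, (∀ᶠ r in 𝓝 s, HasDerivAt g (g' r) r) ∧ HasDerivAt g' b s

theorem D2At.sub {g h : ℝ → ℝ} {s b c : ℝ} (hg : D2At g s b) (hh : D2At h s c) :
    D2At (fun r => g r - h r) s (b - c) := by
  obtain ⟨g', h1, h2⟩ := hg
  obtain ⟨k', h3, h4⟩ := hh
  refine ⟨fun r => g' r - k' r, ?_, h2.sub h4⟩
  filter_upwards [h1, h3] with r a b using a.sub b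

open Topology Filter in
theorem D2At.nonneg {g : ℝ → ℝ} {s b : ℝ} (hg : D2At g s b) (hm : IsLocalMin g s) : 0 ≤ b := by
  obtain ⟨g', h1, h2⟩ := hg
  by_contra hb
  push Not at hb
  have e : deriv g =ᶠ[𝓝 s] g' := by
    filter_upwards [h1] with r hr using hr.deriv
  have hdd : deriv (deriv g) s = b := by
    rw [e.deriv_eq, h2.deriv]
  have hmax : IsLocalMax g s := by
    apply isLocalMax_of_deriv_deriv_neg
    · rw [hdd]; exact hb
    · exact hm.deriv_eq_zero
    · exact h1.self_of_nhds.continuousAt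
  have hconst : g =ᶠ[𝓝 s] fun _ => g s := by
    filter_upwards [hm, hmax] with r a b using le_antisymm b a
  have h0 : deriv g =ᶠ[𝓝 s] fun _ => 0 := by
    have := hconst.deriv
    simpa using this
  have : deriv (deriv g) s = 0 := by rw [h0.deriv_eq]; simp
  linarith

open Topology Filter in
theorem left_min_deriv {f : ℝ → ℝ} {t d t0 : ℝ} (ht : t0 < t) (hf : HasDerivAt f d t)
    (hm : ∀ s ∈ Ioo t0 t, f t ≤ f s) : d ≤ 0 := by
  have h := (hasDerivAt_iff_tendsto_slope.1 hf).mono_left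
    (nhdsWithin_mono t (show Iio t ⊆ {t}ᶜ from fun s hs => ne_of_lt hs))
  refine le_of_tendsto h ?_
  filter_upwards [Ioo_mem_nhdsLT ht] with s hs
  rw [slope_def_field]
  exact div_nonpos_of_nonneg_of_nonpos (by linarith [hm s hs]) (by linarith [hs.2])

open Topology Filter in
theorem minPrinciple {n : ℕ} (Ω : Set (Fin n → ℝ)) (hΩo : IsOpen Ω)
    (hΩb : Bornology.IsBounded Ω) (t0 S C : ℝ) (hS : t0 < S)
    (U : ℝ → (Fin n → ℝ) → ℝ)
    (hc : ContinuousOn (fun p : ℝ × (Fin n → ℝ) => U p.1 p.2) (Icc t0 S ×ˢ closure Ω))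
    (hd : ∀ t ∈ Ioo t0 S, ∀ x ∈ Ω, ∃ a, ∃ b : Fin n → ℝ, HasDerivAt (fun s => U s x) a t ∧
      (∀ i, D2At (fun s => U t (Function.update x i s)) (x i) (b i)) ∧
      (U t x < 0 → C * U t x ≤ a - ∑ i, b i))
    (hl : ∀ t ∈ Icc t0 S, ∀ x ∈ frontier Ω, 0 ≤ U t x)
    (hi : ∀ x ∈ closure Ω, 0 ≤ U t0 x) :
    ∀ t ∈ Icc t0 S, ∀ x ∈ closure Ω, 0 ≤ U t x := by
  have main : ∀ t ∈ Ico t0 S, ∀ x ∈ closure Ω, 0 ≤ U t x := by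
    intro T hT y hy
    by_contra hneg
    push Not at hneg
    have hsub : Icc t0 T ×ˢ closure Ω ⊆ Icc t0 S ×ˢ closure Ω :=
      prod_mono (Icc_subset_Icc_right hT.2.le) le_rfl
    have hK : IsCompact (Icc t0 T ×ˢ closure Ω) := isCompact_Icc.prod hΩb.isCompact_closure
    have hcZ : ContinuousOn (fun p : ℝ × (Fin n → ℝ) => Real.exp (-(C+1) * p.1) * U p.1 p.2)
        (Icc t0 T ×ˢ closure Ω) :=
      ContinuousOn.mul (by fun_prop) (hc.mono hsub)
    obtain ⟨⟨t, x⟩, ⟨ht, hx⟩, hmin⟩ := hK.exists_isMinOn ⟨(T, y), ⟨⟨hT.1, le_rfl⟩, hy⟩⟩ hcZ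
    have hmin' : ∀ s ∈ Icc t0 T, ∀ z ∈ closure Ω,
        Real.exp (-(C+1) * t) * U t x ≤ Real.exp (-(C+1) * s) * U s z :=
      fun s hs z hz => hmin (show (s, z) ∈ _ from ⟨hs, hz⟩)
    simp only at ht hx
    have hUneg : U t x < 0 := by
      have h1 := hmin' T ⟨hT.1, le_rfl⟩ y hy
      have h2 : Real.exp (-(C+1) * T) * U T y < 0 :=
        mul_neg_of_pos_of_neg (Real.exp_pos _) hneg
      by_contra h3
      push Not at h3
      have := mul_nonneg (Real.exp_pos (-(C+1) * t)).le h3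
      linarith
    have ht0 : t0 < t := by
      rcases eq_or_lt_of_le ht.1 with h | h
      · subst h; linarith [hi x hx]
      · exact h
    have hxΩ : x ∈ Ω := by
      by_contra hxn
      have : x ∈ frontier Ω := by
        rw [hΩo.frontier_eq]; exact ⟨hx, hxn⟩
      linarith [hl t ⟨ht.1, ht.2.trans hT.2.le⟩ x this]
    obtain ⟨a, b, ha, hb, hab⟩ := hd t ⟨ht0, ht.2.trans_lt hT.2⟩ x hxΩ
    have hb0 : ∀ i, 0 ≤ b i := by
      intro i
      apply (hb i).nonneg
      have hcont : ContinuousAt (fun s => Function.update x i s) (x i) := by fun_prop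
      have : ∀ᶠ s in 𝓝 (x i), Function.update x i s ∈ Ω := by
        apply hcont.eventually_mem
        simpa using hΩo.mem_nhds hxΩ
      filter_upwards [this] with s hs
      have := hmin' t ht _ (subset_closure hs)
      simpa using le_of_mul_le_mul_left this (Real.exp_pos _)
    have hE : HasDerivAt (fun s => Real.exp (-(C+1) * s)) (Real.exp (-(C+1) * t) * (-(C+1))) t := by
      have := ((hasDerivAt_id t).const_mul (-(C+1))).exp
      simpa using this
    have hda := left_min_deriv ht0 (hE.mul ha)
      (fun s hs => hmin' s ⟨hs.1.le, hs.2.le.trans ht.2⟩ x hx)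
    have h5 : Real.exp (-(C+1) * t) * (a - (C+1) * U t x) ≤ 0 := by linarith
    have h6 : a - (C+1) * U t x ≤ 0 := by
      by_contra h
      push Not at h
      have := mul_pos (Real.exp_pos (-(C+1) * t)) h
      linarith
    have h7 := hab hUneg
    have h8 : 0 ≤ ∑ i, b i := Finset.sum_nonneg fun i _ => hb0 i
    linarith
  intro t ht x hx
  have hcl : closure (Ico t0 S) = Icc t0 S := closure_Ico hS.ne
  have hcx : ContinuousOn (fun s => U s x) (Icc t0 S) :=
    hc.comp (f := fun s => (s, x)) (by fun_prop) (fun s hs => ⟨hs, hx⟩)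
  exact le_on_closure (f := fun _ => (0:ℝ)) (g := fun s => U s x) (s := Ico t0 S)
    (fun s hs => main s hs x hx) continuousOn_const (by rwa [hcl]) (by rwa [hcl])

open Topology Filter in
theorem reg_D2 {n : ℕ} {Ω : Set (Fin n → ℝ)} (hΩo : IsOpen Ω) {S : ℝ}
    {u : ℝ → (Fin n → ℝ) → ℝ} (hu : ParabolicRegular Ω S u) {t : ℝ} (ht : t ∈ Ioo 0 S)
    {x : Fin n → ℝ} (hx : x ∈ Ω) (i : Fin n) :
    D2At (fun s => u t (Function.update x i s)) (x i) (spatialDeriv2 u i i t x) := by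
  refine ⟨fun s => spatialDeriv u i t (Function.update x i s), ?_, ?_⟩
  · have hcont : ContinuousAt (fun s => Function.update x i s) (x i) := by fun_prop
    have : ∀ᶠ s in 𝓝 (x i), Function.update x i s ∈ Ω := by
      apply hcont.eventually_mem
      simpa using hΩo.mem_nhds hx
    filter_upwards [this] with s hs
    have := (hu.diff_x t ht _ hs i).hasDerivAt
    simpa [spatialDeriv] using this
  · exact (hu.diff_xx t ht x hx i i).hasDerivAt

theorem barrier_t (ε C A B K t0 t : ℝ) :
    HasDerivAt (fun s => ε * Real.exp (-C * s) * (Real.exp (A + B * (s - t0)) - K))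
      (-C * (ε * Real.exp (-C * t) * (Real.exp (A + B * (t - t0)) - K))
        + B * (ε * Real.exp (-C * t) * Real.exp (A + B * (t - t0)))) t := by
  have h1 := ((hasDerivAt_id' t).const_mul (-C)).exp
  have h2 := ((((hasDerivAt_id' t).sub_const t0).const_mul B).const_add A).exp
  have := (h1.const_mul ε).mul (h2.sub_const K)
  refine this.congr_deriv ?_
  ring

theorem barrier_x (D a A K s : ℝ) :
    D2At (fun r => D * (Real.exp (a * r + A) - K)) s (a ^ 2 * (D * Real.exp (a * s + A))) := by
  have h : ∀ r, HasDerivAt (fun r => Real.exp (a * r + A)) (a * Real.exp (a * r + A)) r := by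
    intro r
    have := (((hasDerivAt_id' r).const_mul a).add_const A).exp
    refine this.congr_deriv ?_
    ring
  refine ⟨fun r => D * (a * Real.exp (a * r + A)),
    Filter.Eventually.of_forall fun r => ((h r).sub_const K).const_mul D, ?_⟩
  refine (((h s).const_mul a).const_mul D).congr_deriv ?_
  ring

theorem sum_update' {n : ℕ} (x : Fin n → ℝ) (i : Fin n) (s : ℝ) :
    ∑ j, Function.update x i s j = s + (∑ j, x j - x i) := by
  rw [Finset.sum_update_of_mem (Finset.mem_univ i), ← Finset.erase_eq,
    ← Finset.add_sum_erase Finset.univ x (Finset.mem_univ i)]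
  ring

/-- the key lower bound (2.13): with `χ = δ₂` on `[δ₁,S] × ∂Ω` and `V ≤ q`,
the constant `a₁ := inf_{[δ₁,S] × cl Ω} w` is strictly positive and `v ≥ a₁` on
`[δ₁,S] × cl Ω`. -/
theorem statement5 {n : ℕ} (hn : 2 ≤ n) (Ω : Set (Fin n → ℝ)) (hΩo : IsOpen Ω)
    (hΩb : Bornology.IsBounded Ω) (hΩc : IsConnected Ω)
    (S δ₁ δ₂ : ℝ) (hS : 0 < S) (hδ₁ : 0 < δ₁) (hδ₁S : δ₁ < S) (hδ₂ : 0 < δ₂)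
    (χ : ℝ → (Fin n → ℝ) → ℝ)
    (hχc : ContinuousOn (fun p : ℝ × (Fin n → ℝ) => χ p.1 p.2) (Icc 0 S ×ˢ frontier Ω))
    (hχ0 : ∀ t ∈ Icc 0 S, ∀ x ∈ frontier Ω, 0 ≤ χ t x)
    (hχδ : ∀ t ∈ Icc δ₁ S, ∀ x ∈ frontier Ω, χ t x = δ₂)
    (q V : ℝ → (Fin n → ℝ) → ℝ)
    (hqc : ContinuousOn (fun p : ℝ × (Fin n → ℝ) => q p.1 p.2) (Ioo 0 S ×ˢ Ω))
    (hqb : ∃ C, ∀ t ∈ Ioo 0 S, ∀ x ∈ Ω, |q t x| ≤ C)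
    (hVc : ContinuousOn (fun p : ℝ × (Fin n → ℝ) => V p.1 p.2) (Ioo 0 S ×ˢ Ω))
    (hVb : ∃ C, ∀ t ∈ Ioo 0 S, ∀ x ∈ Ω, |V t x| ≤ C)
    (hVq : ∀ t ∈ Ioo 0 S, ∀ x ∈ Ω, V t x ≤ q t x)
    (w v : ℝ → (Fin n → ℝ) → ℝ)
    (hw : IsClassicalSolution Ω S q (fun _ _ => (0 : ℝ)) χ w)
    (hv : IsClassicalSolution Ω S V (fun _ _ => (0 : ℝ)) χ v) :
    0 < sInf ((fun p : ℝ × (Fin n → ℝ) => w p.1 p.2) '' (Icc δ₁ S ×ˢ closure Ω)) ∧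
    ∀ t ∈ Icc δ₁ S, ∀ x ∈ closure Ω,
      sInf ((fun p : ℝ × (Fin n → ℝ) => w p.1 p.2) '' (Icc δ₁ S ×ˢ closure Ω)) ≤ v t x := by
  obtain ⟨C1, hC1⟩ := hqb
  obtain ⟨C2, hC2⟩ := hVb
  -- common nonnegative bound
  obtain ⟨C, hC0, hqC, hVC⟩ : ∃ C : ℝ, 0 ≤ C ∧ (∀ t ∈ Ioo 0 S, ∀ x ∈ Ω, |q t x| ≤ C) ∧
      (∀ t ∈ Ioo 0 S, ∀ x ∈ Ω, |V t x| ≤ C) :=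
    ⟨max 0 (max C1 C2), le_max_left _ _,
      fun t ht x hx => (hC1 t ht x hx).trans ((le_max_left _ _).trans (le_max_right _ _)),
      fun t ht x hx => (hC2 t ht x hx).trans ((le_max_right _ _).trans (le_max_right _ _))⟩
  have hw0 : ∀ t ∈ Icc 0 S, ∀ x ∈ closure Ω, 0 ≤ w t x := by
    refine minPrinciple Ω hΩo hΩb 0 S C hS w hw.cont ?_ ?_ ?_
    · intro t ht x hx
      refine ⟨timeDeriv w t x, fun i => spatialDeriv2 w i i t x,
        (hw.diff_t t ht x hx).hasDerivAt, fun i => reg_D2 hΩo hw.toParabolicRegular ht hx i, ?_⟩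
      intro hneg
      have e := hw.eqn t ht x hx
      unfold laplacian at e
      have := (abs_le.1 (hqC t ht x hx)).1
      nlinarith
    · intro t ht x hx
      rw [hw.lateral t ht x hx]; exact hχ0 t ht x hx
    · intro x hx; rw [hw.initial x hx]
  have hvw : ∀ t ∈ Icc 0 S, ∀ x ∈ closure Ω, 0 ≤ v t x - w t x := by
    refine minPrinciple Ω hΩo hΩb 0 S C hS (fun t x => v t x - w t x) (hv.cont.sub hw.cont) ?_ ?_ ?_
    · intro t ht x hx
      refine ⟨timeDeriv v t x - timeDeriv w t x,
        fun i => spatialDeriv2 v i i t x - spatialDeriv2 w i i t x,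
        (hv.diff_t t ht x hx).hasDerivAt.sub (hw.diff_t t ht x hx).hasDerivAt,
        fun i => (reg_D2 hΩo hv.toParabolicRegular ht hx i).sub
          (reg_D2 hΩo hw.toParabolicRegular ht hx i), ?_⟩
      intro hneg
      have e := hw.eqn t ht x hx
      have e' := hv.eqn t ht x hx
      unfold laplacian at e e'
      rw [Finset.sum_sub_distrib]
      have h1 := (abs_le.1 (hVC t ht x hx)).1
      have h2 := mul_nonneg (sub_nonneg.2 (hVq t ht x hx))
        (hw0 t ⟨ht.1.le, ht.2.le⟩ x (subset_closure hx))
      have h3 : 0 ≤ (V t x + C) * -(v t x - w t x) := mul_nonneg (by linarith) (by linarith)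
      nlinarith
    · intro t ht x hx
      rw [hw.lateral t ht x hx, hv.lateral t ht x hx]; simp
    · intro x hx; rw [hw.initial x hx, hv.initial x hx]; simp
  have hcomp : IsCompact (Icc 0 S ×ˢ closure Ω) := isCompact_Icc.prod hΩb.isCompact_closure
  have hne : (closure Ω).Nonempty := hΩc.nonempty.closure
  have hfr : frontier Ω ⊆ closure Ω := frontier_subset_closure
  -- early time
  obtain ⟨t0, ht00, ht0δ, hbd⟩ : ∃ t0, 0 ≤ t0 ∧ t0 < δ₁ ∧ ∀ t ∈ Icc t0 S, ∀ x ∈ frontier Ω,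
      δ₂ / 2 ≤ w t x := by
    have huc := hcomp.uniformContinuousOn_of_continuous hw.cont
    obtain ⟨η, hη, hη'⟩ := Metric.uniformContinuousOn_iff.1 huc (δ₂ / 2) (by linarith)
    refine ⟨max 0 (δ₁ - η / 2), le_max_left _ _, max_lt hδ₁ (by linarith), ?_⟩
    intro t ht x hx
    have ht1 : 0 ≤ t := (le_max_left _ _).trans ht.1
    have ht2 : δ₁ - η / 2 ≤ t := (le_max_right _ _).trans ht.1
    rcases le_total δ₁ t with h | h
    · rw [hw.lateral t ⟨ht1, ht.2⟩ x hx, hχδ t ⟨h, ht.2⟩ x hx]; linarith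
    · have := hη' (t, x) ⟨⟨ht1, ht.2⟩, hfr hx⟩ (δ₁, x) ⟨⟨hδ₁.le, hδ₁S.le⟩, hfr hx⟩ (by
        rw [Prod.dist_eq]
        simp only [dist_self, Real.dist_eq]
        rw [max_lt_iff, abs_lt]
        exact ⟨⟨by linarith, by linarith⟩, hη⟩)
      rw [Real.dist_eq, abs_lt] at this
      have e : w δ₁ x = δ₂ := by
        rw [hw.lateral δ₁ ⟨hδ₁.le, hδ₁S.le⟩ x hx, hχδ δ₁ ⟨le_rfl, hδ₁S.le⟩ x hx]
      simp only [e] at this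
      linarith [this.1]
  obtain ⟨R, hR0, hR⟩ : ∃ R : ℝ, 0 < R ∧ ∀ x ∈ closure Ω, |∑ j, x j| ≤ R := by
    have hcs : Continuous (fun x : Fin n → ℝ => ∑ j, x j) := by fun_prop
    obtain ⟨R, hR⟩ := hΩb.isCompact_closure.exists_bound_of_continuousOn hcs.continuousOn
    exact ⟨max R 1, by positivity, fun x hx => (hR x hx).trans (le_max_left _ _)⟩
  have hn0 : (0:ℝ) < n := by exact_mod_cast (by omega : 0 < n)
  obtain ⟨a, ha0, ha⟩ : ∃ a : ℝ, 0 < a ∧ 2 * R < n * a * (δ₁ - t0) := by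
    have hτ : 0 < δ₁ - t0 := by linarith
    refine ⟨3 * R / (n * (δ₁ - t0)), by positivity, ?_⟩
    have : n * (3 * R / (n * (δ₁ - t0))) * (δ₁ - t0) = 3 * R := by field_simp
    linarith
  have hB0 : 0 ≤ n * a ^ 2 := by positivity
  set ε : ℝ := δ₂ / 2 / Real.exp (a * R + n * a ^ 2 * S) with hε
  have hε0 : 0 < ε := by positivity
  let h : ℝ → (Fin n → ℝ) → ℝ := fun t x =>
    ε * Real.exp (-C * t) * (Real.exp (a * (∑ j, x j) + n * a ^ 2 * (t - t0)) - Real.exp (a * R))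
  have hwh : ∀ t ∈ Icc t0 S, ∀ x ∈ closure Ω, 0 ≤ w t x - h t x := by
    refine minPrinciple Ω hΩo hΩb t0 S C (by linarith) (fun t x => w t x - h t x) ?_ ?_ ?_ ?_
    · refine (hw.cont.mono (prod_mono (Icc_subset_Icc_left ht00) le_rfl)).sub ?_
      apply Continuous.continuousOn
      simp only [h]
      fun_prop
    · intro t ht x hx
      have ht' : t ∈ Ioo 0 S := ⟨by linarith [ht.1], ht.2⟩
      have e := hw.eqn t ht' x hx
      unfold laplacian at e
      refine ⟨timeDeriv w t x - _, fun i => spatialDeriv2 w i i t x -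
          a ^ 2 * (ε * Real.exp (-C * t) * Real.exp (a * (∑ j, x j) + n * a ^ 2 * (t - t0))),
        (hw.diff_t t ht' x hx).hasDerivAt.sub (barrier_t ε C _ _ _ t0 t), fun i => ?_, ?_⟩
      · refine (reg_D2 hΩo hw.toParabolicRegular ht' hx i).sub ?_
        have := barrier_x (ε * Real.exp (-C * t)) a
          (a * (∑ j, x j - x i) + n * a ^ 2 * (t - t0)) (Real.exp (a * R)) (x i)
        simp only [h, sum_update']
        convert this using 4
        · ring_nf
        · ring_nf
      · intro hneg
        have hww := hw0 t ⟨ht'.1.le, ht'.2.le⟩ x (subset_closure hx)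
        have hq1 := (abs_le.1 (hqC t ht' x hx)).2
        rw [Finset.sum_sub_distrib]
        simp only [Finset.sum_const, Finset.card_univ, Fintype.card_fin, nsmul_eq_mul]
        change C * (w t x - h t x) ≤ _ - (-C * h t x + _) - _
        have h1 : 0 ≤ (C - q t x) * w t x := mul_nonneg (by linarith) hww
        have h2 : 0 ≤ C * -(w t x - h t x) := mul_nonneg hC0 (by linarith)
        nlinarith
    · intro t ht x hx
      have h1 := hbd t ht x hx
      have h2 : h t x ≤ δ₂ / 2 := by
        have h3 : Real.exp (a * (∑ j, x j) + n * a ^ 2 * (t - t0)) ≤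
            Real.exp (a * R + n * a ^ 2 * S) := by
          apply Real.exp_le_exp.2
          have := (abs_le.1 (hR x (hfr hx))).2
          have h5 := ht.2
          gcongr
          linarith
        have h4 : Real.exp (-C * t) ≤ 1 := by
          apply Real.exp_le_one_iff.2
          have : 0 ≤ C * t := mul_nonneg hC0 (by linarith [ht.1])
          linarith
        calc h t x ≤ ε * Real.exp (-C * t) * Real.exp (a * R + n * a ^ 2 * S) := by
              simp only [h]
              gcongr
              linarith [Real.exp_pos (a * R)]
          _ ≤ ε * 1 * Real.exp (a * R + n * a ^ 2 * S) := by gcongr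
          _ = δ₂ / 2 := by rw [hε]; field_simp
      linarith
    · intro x hx
      have h1 := hw0 t0 ⟨ht00, by linarith⟩ x hx
      have h2 : h t0 x ≤ 0 := by
        simp only [h]
        apply mul_nonpos_of_nonneg_of_nonpos (by positivity)
        rw [sub_nonpos]
        apply Real.exp_le_exp.2
        have := mul_le_mul_of_nonneg_left (abs_le.1 (hR x hx)).2 ha0.le
        linarith
      linarith
  have hpos : ∀ t ∈ Icc δ₁ S, ∀ x ∈ closure Ω, 0 < w t x := by
    intro t ht x hx
    have h1 := hwh t ⟨by linarith [ht.1], ht.2⟩ x hx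
    have h2 : 0 < h t x := by
      simp only [h]
      apply mul_pos (by positivity)
      rw [sub_pos]
      apply Real.exp_lt_exp.2
      have h3 := mul_le_mul_of_nonneg_left (abs_le.1 (hR x hx)).1 ha0.le
      have h4 := mul_lt_mul_of_pos_left ha ha0
      have h5 : n * a ^ 2 * (δ₁ - t0) ≤ n * a ^ 2 * (t - t0) :=
        mul_le_mul_of_nonneg_left (by linarith [ht.1]) hB0
      nlinarith
    linarith
  have hcomp' : IsCompact (Icc δ₁ S ×ˢ closure Ω) := isCompact_Icc.prod hΩb.isCompact_closure
  have hcw : ContinuousOn (fun p : ℝ × (Fin n → ℝ) => w p.1 p.2) (Icc δ₁ S ×ˢ closure Ω) :=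
    hw.cont.mono (prod_mono (Icc_subset_Icc_left hδ₁.le) le_rfl)
  have hcimg := hcomp'.image_of_continuousOn hcw
  have hnee : (Icc δ₁ S ×ˢ closure Ω).Nonempty := (nonempty_Icc.2 hδ₁S.le).prod hne
  constructor
  · obtain ⟨⟨t, x⟩, ⟨ht, hx⟩, e⟩ := hcimg.sInf_mem (hnee.image _)
    rw [← e]
    exact hpos t ht x hx
  · intro t ht x hx
    have h1 := hvw t ⟨by linarith [ht.1], ht.2⟩ x hx
    have h2 : sInf ((fun p : ℝ × (Fin n → ℝ) => w p.1 p.2) '' (Icc δ₁ S ×ˢ closure Ω)) ≤ w t x :=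
      csInf_le hcimg.bddBelow ⟨(t, x), ⟨ht, hx⟩, rfl⟩
    linarith
end

section
/- Let S > 0, 0 < δ₁ < S, δ₂ > 0, r > 0. Let χ : [0,S] × ∂Ω → [0,∞) be continuous with χ(t,x) = δ₂ for all (t,x) ∈ [δ₁,S] × ∂Ω, and let q : (0,S) × Ω → ℝ be continuous and bounded. Let F : [0,S] × cl(Ω) × ℝ → ℝ be continuous, twice continuously differentiable in the last variable, with: F(t,x,0) = 0 for all (t,x); ∂²_uF(t,x,u) ≤ 0 for u ≥ 0 and ∂²_uF(t,x,u) ≥ 0 for u ≤ 0; and ∂_uF(t,x,0) ≤ q(t,x) for all (t,x) ∈ (0,S) × Ω. Suppose that for each λ ∈ [−r,r] there are functions v_λ, v⁽¹⁾_λ, v⁽²⁾_λ : [0,S] × cl(Ω) → ℝ such that, setting V_λ(t,x) := ∂_uF(t,x,v_λ(t,x)): (i) v_λ is a classical solution of ∂_t v − Δv + F(t,x,v) = 0 in (0,S) × Ω with lateral boundary values λχ and zero initial values, and v_0 ≡ 0; (ii) v⁽¹⁾_λ is a classical solution of ∂_t u − Δu + V_λ u = 0 with lateral boundary values χ and zero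 initial values; (iii) v⁽²⁾_λ is a classical solution of ∂_t u − Δu + V_λ u = −∂²_uF(t,x,v_λ(t,x)) (v⁽¹⁾_λ(t,x))² with zero lateral boundary values and zero initial values; (iv) for each (t,x) ∈ [0,S] × cl(Ω), λ ↦ v_λ(t,x) is continuous on [−r,r] and differentiable on (−r,r) with derivative v⁽¹⁾_λ(t,x), and λ ↦ v⁽¹⁾_λ(t,x) is differentiable on (−r,r) with derivative v⁽²⁾_λ(t,x). Let w be a classical solution of ∂_t w − Δw + q w = 0 in (0,S) × Ω with lateral boundary values χ and zero initial values, and set a₁ := inf { w(t,x) : (t,x) ∈ [δ₁,S] × cl(Ω) }. Then a₁ > 0 and, for every (t₀,x₀) ∈ (δ₁,S) × Ω and every s ∈ [−a₁ r, a₁ r], there exists λ ∈ [−r,r] such that v_λ(t₀,x₀) = s. -/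
open Set

open Paper Set

def MJet {n : ℕ} (z : ℝ → (Fin n → ℝ) → ℝ) (t : ℝ) (x : Fin n → ℝ) (zt L : ℝ) : Prop :=
  HasDerivAt (fun s => z s x) zt t ∧ ∃ (g : Fin n → ℝ → ℝ) (l : Fin n → ℝ),
    (∀ i, (∀ᶠ s in nhds (x i), HasDerivAt (fun s => z t (Function.update x i s)) (g i s) s) ∧
      HasDerivAt (g i) (l i) (x i)) ∧ L = ∑ i, l i

theorem MJet.lin {n : ℕ} {u v : ℝ → (Fin n → ℝ) → ℝ} {t : ℝ} {x : Fin n → ℝ} {a b c d : ℝ}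
    (hu : MJet u t x a b) (hv : MJet v t x c d) (α β : ℝ) :
    MJet (fun t x => α * u t x + β * v t x) t x (α * a + β * c) (α * b + β * d) := by
  obtain ⟨h1, g, l, h2, rfl⟩ := hu
  obtain ⟨h3, g', l', h4, rfl⟩ := hv
  refine ⟨(h1.const_mul α).add (h3.const_mul β), fun i s => α * g i s + β * g' i s,
    fun i => α * l i + β * l' i, fun i => ⟨?_, ?_⟩, ?_⟩
  · filter_upwards [(h2 i).1, (h4 i).1] with s hs hs'
    exact (hs.const_mul α).add (hs'.const_mul β)
  · exact ((h2 i).2.const_mul α).add ((h4 i).2.const_mul β)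
  · rw [Finset.sum_add_distrib, Finset.mul_sum, Finset.mul_sum]

theorem second_test {g g' : ℝ → ℝ} {c l : ℝ} (h : ∀ᶠ s in nhds c, HasDerivAt g (g' s) s)
    (h' : HasDerivAt g' l c) (hm : IsLocalMin g c) : 0 ≤ l := by
  by_contra hl
  push Not at hl
  have e : deriv g =ᶠ[nhds c] g' := h.mono fun s hs => hs.deriv
  have e2 : deriv (deriv g) c = l := by rw [e.deriv_eq, h'.deriv]
  have hc : ContinuousAt g c := h.self_of_nhds.continuousAt
  have hM := isLocalMax_of_deriv_deriv_neg (e2 ▸ hl) hm.deriv_eq_zero hc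
  have hconst : g =ᶠ[nhds c] fun _ => g c := by
    filter_upwards [hm, hM] with s h1 h2
    exact le_antisymm h2 h1
  have h0 : deriv g =ᶠ[nhds c] fun _ => 0 := by
    have := hconst.deriv
    simpa using this
  rw [h0.deriv_eq] at e2
  simp at e2
  linarith

theorem left_min {f : ℝ → ℝ} {f' a t : ℝ} (hat : a < t) (h : HasDerivAt f f' t)
    (hm : ∀ s ∈ Icc a t, f t ≤ f s) : f' ≤ 0 := by
  have h1 := (hasDerivAt_iff_tendsto_slope.1 h).mono_left
    (nhdsWithin_mono t (show Iio t ⊆ {t}ᶜ from fun s hs => ne_of_lt hs))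
  refine le_of_tendsto h1 ?_
  filter_upwards [Ioo_mem_nhdsLT hat] with s hs
  rw [slope_def_field]
  exact div_nonpos_of_nonneg_of_nonpos (by linarith [hm s ⟨hs.1.le, hs.2.le⟩])
    (by linarith [hs.2])

theorem min_principle {n : ℕ} {Ω : Set (Fin n → ℝ)} (hΩo : IsOpen Ω)
    (hΩb : Bornology.IsBounded Ω) {a S : ℝ} (haS : a < S) {z : ℝ → (Fin n → ℝ) → ℝ}
    (hc : ContinuousOn (fun p : ℝ × (Fin n → ℝ) => z p.1 p.2) (Icc a S ×ˢ closure Ω)) (M : ℝ)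
    (hj : ∀ t ∈ Ioo a S, ∀ x ∈ Ω, z t x < 0 → ∃ zt L, MJet z t x zt L ∧ M * z t x ≤ zt - L)
    (hi : ∀ x ∈ closure Ω, 0 ≤ z a x) (hl : ∀ t ∈ Icc a S, ∀ x ∈ frontier Ω, 0 ≤ z t x) :
    ∀ t ∈ Icc a S, ∀ x ∈ closure Ω, 0 ≤ z t x := by
  have key : ∀ T ∈ Ico a S, ∀ x ∈ closure Ω, 0 ≤ z T x := by
    intro T hT x1 hx1
    by_contra hneg
    push Not at hneg
    have hK : IsCompact (Icc a T ×ˢ closure Ω) := isCompact_Icc.prod hΩb.isCompact_closure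
    have hYc : ContinuousOn (fun p : ℝ × (Fin n → ℝ) => Real.exp (-(M+1) * p.1) * z p.1 p.2)
        (Icc a T ×ˢ closure Ω) := by
      refine ContinuousOn.mul (by fun_prop) (hc.mono ?_)
      exact prod_mono (Icc_subset_Icc_right hT.2.le) le_rfl
    obtain ⟨⟨t, x⟩, ⟨ht, hx⟩, hmin⟩ := hK.exists_isMinOn ⟨(T, x1), ⟨hT.1, le_rfl⟩, hx1⟩ hYc
    simp only at ht hx
    have hmin' : ∀ s ∈ Icc a T, ∀ y ∈ closure Ω,
        Real.exp (-(M+1) * t) * z t x ≤ Real.exp (-(M+1) * s) * z s y :=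
      fun s hs y hy => isMinOn_iff.1 hmin (s, y) ⟨hs, hy⟩
    have hz : z t x < 0 := by
      have h1 := hmin' T ⟨hT.1, le_rfl⟩ x1 hx1
      have h2 : Real.exp (-(M+1) * T) * z T x1 < 0 := mul_neg_of_pos_of_neg (Real.exp_pos _) hneg
      by_contra h3
      push Not at h3
      have := mul_nonneg (Real.exp_pos (-(M+1) * t)).le h3
      linarith
    have hat : a < t := by
      rcases ht.1.lt_or_eq with h | h
      · exact h
      · exact absurd (hi x hx) (by rw [h]; linarith)
    have htS : t < S := ht.2.trans_lt hT.2
    have hxΩ : x ∈ Ω := by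
      by_contra h
      exact absurd (hl t ⟨hat.le, htS.le⟩ x ⟨hx, by rwa [hΩo.interior_eq]⟩) (by linarith)
    obtain ⟨zt, L, ⟨hzt, g, l, hg, rfl⟩, hineq⟩ := hj t ⟨hat, htS⟩ x hxΩ hz
    have hE : HasDerivAt (fun s => Real.exp (-(M+1) * s)) (Real.exp (-(M+1) * t) * (-(M+1))) t := by
      simpa using ((hasDerivAt_id t).const_mul (-(M+1))).exp
    have h1 := left_min hat (hE.mul hzt) (fun s hs => hmin' s ⟨hs.1, hs.2.trans ht.2⟩ x hx)
    have h2 : ∀ i, 0 ≤ l i := by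
      intro i
      refine second_test (hg i).1 (hg i).2 ?_
      have hcu : ContinuousAt (fun s => Function.update x i s) (x i) := by fun_prop
      have : ∀ᶠ s in nhds (x i), Function.update x i s ∈ Ω :=
        hcu.eventually_mem (by simpa using hΩo.mem_nhds hxΩ)
      filter_upwards [this] with s hs
      have := hmin' t ht _ (subset_closure hs)
      simpa using le_of_mul_le_mul_left this (Real.exp_pos _)
    have h3 : 0 ≤ ∑ i, l i := Finset.sum_nonneg fun i _ => h2 i
    have h4 : zt - (M+1) * z t x ≤ 0 := by
      have : Real.exp (-(M+1) * t) * (zt - (M+1) * z t x) ≤ 0 := by linarith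
      by_contra h
      push Not at h
      have := mul_pos (Real.exp_pos (-(M+1) * t)) h
      linarith
    linarith
  intro t ht x hx
  have hcx : ContinuousOn (fun s => z s x) (Icc a S) :=
    hc.comp (f := fun s => (s, x)) (by fun_prop) (fun s hs => ⟨hs, hx⟩)
  rw [← closure_Ico haS.ne] at ht hcx
  exact le_on_closure (f := fun _ => (0:ℝ)) (g := fun s => z s x)
    (fun s hs => key s hs x hx) continuousOn_const hcx ht

theorem sol_jet {n : ℕ} {Ω : Set (Fin n → ℝ)} (hΩo : IsOpen Ω) {S : ℝ}
    {c f g u : ℝ → (Fin n → ℝ) → ℝ} (h : IsClassicalSolution Ω S c f g u) {t : ℝ}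
    (ht : t ∈ Ioo 0 S) {x : Fin n → ℝ} (hx : x ∈ Ω) :
    MJet u t x (timeDeriv u t x) (laplacian u t x) := by
  refine ⟨(h.diff_t t ht x hx).hasDerivAt, fun i s => spatialDeriv u i t (Function.update x i s),
    fun i => spatialDeriv2 u i i t x, fun i => ⟨?_, ?_⟩, rfl⟩
  · have hcu : ContinuousAt (fun s => Function.update x i s) (x i) := by fun_prop
    have : ∀ᶠ s in nhds (x i), Function.update x i s ∈ Ω :=
      hcu.eventually_mem (by simpa using hΩo.mem_nhds hx)
    filter_upwards [this] with s hs
    have := (h.diff_x t ht _ hs i).hasDerivAt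
    simp only [Function.update_idem, Function.update_self] at this
    simpa [spatialDeriv] using this
  · exact (h.diff_xx t ht x hx i i).hasDerivAt

theorem exp_jet {n : ℕ} (i0 : Fin n) (A B R t0 t : ℝ) (x : Fin n → ℝ) :
    MJet (fun t x => Real.exp (A * (t - t0) - B * (x i0 + R)) - 1) t x
      (A * Real.exp (A * (t - t0) - B * (x i0 + R)))
      (B ^ 2 * Real.exp (A * (t - t0) - B * (x i0 + R))) := by
  refine ⟨?_, fun i s => if i = i0 then -B * Real.exp (A * (t - t0) - B * (s + R)) else 0,
    fun i => if i = i0 then B ^ 2 * Real.exp (A * (t - t0) - B * (x i0 + R)) else 0,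
    fun i => ?_, by simp⟩
  · have := ((((hasDerivAt_id t).sub_const t0).const_mul A).sub_const
      (B * (x i0 + R))).exp.sub_const 1
    exact this.congr_deriv (by simp only [id]; ring)
  · by_cases hi : i = i0
    · subst hi
      have key : ∀ s, HasDerivAt (fun s => Real.exp (A * (t - t0) - B * (s + R)))
          (-B * Real.exp (A * (t - t0) - B * (s + R))) s := by
        intro s
        have := ((((hasDerivAt_id s).add_const R).const_mul B).const_sub (A * (t - t0))).exp
        exact this.congr_deriv (by simp only [id]; ring)
      simp only [if_true, Function.update_self]
      refine ⟨Filter.Eventually.of_forall fun s => (key s).sub_const 1, ?_⟩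
      exact ((key (x i)).const_mul (-B)).congr_deriv (by ring)
    · simp only [hi, if_false]
      refine ⟨Filter.Eventually.of_forall fun s => ?_, hasDerivAt_const _ _⟩
      simp only [Function.update_of_ne (Ne.symm hi)]
      exact hasDerivAt_const _ _

theorem w_nonneg {n : ℕ} {Ω : Set (Fin n → ℝ)} (hΩo : IsOpen Ω)
    (hΩb : Bornology.IsBounded Ω) {S C : ℝ} (hS : 0 < S)
    {χ q w : ℝ → (Fin n → ℝ) → ℝ} (hχ0 : ∀ t ∈ Icc 0 S, ∀ x ∈ frontier Ω, 0 ≤ χ t x)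
    (hC : ∀ t ∈ Ioo 0 S, ∀ x ∈ Ω, |q t x| ≤ C)
    (hw : IsClassicalSolution Ω S q (fun _ _ => (0 : ℝ)) χ w) :
    ∀ t ∈ Icc 0 S, ∀ x ∈ closure Ω, 0 ≤ w t x := by
  refine min_principle hΩo hΩb hS hw.cont C (fun t ht x hx hz => ⟨_, _, sol_jet hΩo hw ht hx, ?_⟩)
    (fun x hx => (hw.initial x hx).ge) (fun t ht x hx => by rw [hw.lateral t ht x hx]; exact hχ0 t ht x hx)
  have h1 := hw.eqn t ht x hx
  have h2 := (abs_le.1 (hC t ht x hx)).1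
  nlinarith

theorem w_pos {n : ℕ} (i0 : Fin n) {Ω : Set (Fin n → ℝ)} (hΩo : IsOpen Ω)
    (hΩb : Bornology.IsBounded Ω) {S C δ₁ δ₂ : ℝ} (hδ₁ : 0 < δ₁) (hδ₁S : δ₁ < S) (hδ₂ : 0 < δ₂)
    (hC0 : 0 ≤ C)
    {χ q w : ℝ → (Fin n → ℝ) → ℝ} (hχ0 : ∀ t ∈ Icc 0 S, ∀ x ∈ frontier Ω, 0 ≤ χ t x)
    (hχδ : ∀ t ∈ Icc δ₁ S, ∀ x ∈ frontier Ω, χ t x = δ₂)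
    (hC : ∀ t ∈ Ioo 0 S, ∀ x ∈ Ω, |q t x| ≤ C)
    (hw : IsClassicalSolution Ω S q (fun _ _ => (0 : ℝ)) χ w) :
    ∃ m > 0, ∀ t ∈ Icc δ₁ S, ∀ x ∈ closure Ω, m ≤ w t x := by
  have hS : 0 < S := hδ₁.trans hδ₁S
  have hw0 := w_nonneg hΩo hΩb hS hχ0 hC hw
  have hK : IsCompact (Icc 0 S ×ˢ closure Ω) := isCompact_Icc.prod hΩb.isCompact_closure
  -- start time
  obtain ⟨t0, ht0, ht01, hbd⟩ : ∃ t0, 0 < t0 ∧ t0 < δ₁ ∧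
      ∀ t ∈ Icc t0 S, ∀ x ∈ frontier Ω, δ₂ / 2 ≤ w t x := by
    obtain ⟨ε, hε, hu⟩ := Metric.uniformContinuousOn_iff.1
      (hK.uniformContinuousOn_of_continuous hw.cont) (δ₂ / 2) (by positivity)
    refine ⟨max (δ₁ - ε / 2) (δ₁ / 2), lt_max_of_lt_right (by positivity),
      max_lt (by linarith) (by linarith), fun t ht x hx => ?_⟩
    have h1 : δ₁ - ε / 2 ≤ t := (le_max_left _ _).trans ht.1
    have h2 : δ₁ / 2 ≤ t := (le_max_right _ _).trans ht.1
    have hδ : w δ₁ x = δ₂ := by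
      rw [hw.lateral δ₁ ⟨hδ₁.le, hδ₁S.le⟩ x hx, hχδ δ₁ ⟨le_rfl, hδ₁S.le⟩ x hx]
    rcases le_total δ₁ t with h | h
    · rw [hw.lateral t ⟨by linarith, ht.2⟩ x hx, hχδ t ⟨h, ht.2⟩ x hx]; linarith
    · have hxc := frontier_subset_closure hx
      have := hu (t, x) ⟨⟨by linarith, ht.2⟩, hxc⟩ (δ₁, x) ⟨⟨hδ₁.le, hδ₁S.le⟩, hxc⟩ (by
        rw [Prod.dist_eq, dist_self, Real.dist_eq]
        exact max_lt (by rw [abs_lt]; constructor <;> linarith) hε)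
      simp only [Real.dist_eq, hδ] at this
      linarith [(abs_lt.1 this).1]
  obtain ⟨R, hR0, hR⟩ : ∃ R > 0, ∀ x ∈ closure Ω, |x i0| ≤ R := by
    obtain ⟨R, hR⟩ := hΩb.closure.exists_norm_le
    refine ⟨max R 1, by positivity, fun x hx => ?_⟩
    exact ((norm_le_pi_norm x i0).trans (hR x hx)).trans (le_max_left _ _)
  obtain ⟨B, hB0, hB⟩ : ∃ B > 0, B * (2 * R) < (B ^ 2 - C) * (δ₁ - t0) := by
    have he : 0 < δ₁ - t0 := by linarith
    refine ⟨2 * R / (δ₁ - t0) + C + 1, by positivity, ?_⟩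
    set k := 2 * R / (δ₁ - t0) with hk
    have hk0 : 0 < k := by positivity
    have : 2 * R = k * (δ₁ - t0) := by rw [hk]; field_simp
    rw [this]
    have : (k + C + 1) * k < (k + C + 1) ^ 2 - C := by nlinarith [mul_nonneg hC0 hk0.le]
    nlinarith
  set A := B ^ 2 - C with hA
  have hA0 : 0 < A := by
    have he : 0 < δ₁ - t0 := by linarith
    by_contra h
    push Not at h
    nlinarith [mul_pos hB0 hR0]
  set η := δ₂ / 2 * Real.exp (-(A * S)) with hη
  have hη0 : 0 < η := by positivity
  let φ : ℝ → (Fin n → ℝ) → ℝ := fun t x => Real.exp (A * (t - t0) - B * (x i0 + R)) - 1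
  have hφc : Continuous (fun p : ℝ × (Fin n → ℝ) => φ p.1 p.2) := by
    simp only [φ]; fun_prop
  have main := min_principle (z := fun t x => 1 * w t x + (-η) * φ t x) hΩo hΩb (ht01.trans hδ₁S)
    ((continuousOn_const.mul (hw.cont.mono (prod_mono (Icc_subset_Icc_left ht0.le) le_rfl))).add
      (continuousOn_const.mul hφc.continuousOn)) C
    (fun t ht x hx hz => by
      have ht' : t ∈ Ioo 0 S := ⟨ht0.trans ht.1, ht.2⟩
      refine ⟨_, _, (sol_jet hΩo hw ht' hx).lin (exp_jet i0 A B R t0 t x) 1 (-η), ?_⟩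
      have h1 := hw.eqn t ht' x hx
      have h2 := abs_le.1 (hC t ht' x hx)
      have h3 := hw0 t ⟨ht'.1.le, ht'.2.le⟩ x (subset_closure hx)
      simp only [φ] at hz ⊢
      set E := Real.exp (A * (t - t0) - B * (x i0 + R))
      have h4 : timeDeriv w t x - laplacian w t x = - q t x * w t x := by linarith
      have h5 : - C * w t x ≤ - q t x * w t x := by nlinarith
      have h6 : 0 ≤ C * η := by positivity
      have h7 : 0 ≤ C * w t x := by positivity
      rw [hA]
      nlinarith)
    (fun x hx => by
      have h1 := hw0 t0 ⟨ht0.le, (ht01.trans hδ₁S).le⟩ x hx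
      have h2 := (abs_le.1 (hR x hx)).1
      have h3 : φ t0 x ≤ 0 := by
        simp only [φ, sub_self, mul_zero, zero_sub]
        have : Real.exp (-(B * (x i0 + R))) ≤ 1 := Real.exp_le_one_iff.2 (by nlinarith)
        linarith
      nlinarith)
    (fun t ht x hx => by
      have h1 := hbd t ht x hx
      have h2 := (abs_le.1 (hR x (frontier_subset_closure hx))).1
      have h3 : η * φ t x ≤ δ₂ / 2 := by
        have h4 : φ t x ≤ Real.exp (A * S) := by
          simp only [φ]
          have : Real.exp (A * (t - t0) - B * (x i0 + R)) ≤ Real.exp (A * S) := by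
            apply Real.exp_le_exp.2
            have : A * (t - t0) ≤ A * S := by
              apply mul_le_mul_of_nonneg_left _ hA0.le
              linarith [ht.2]
            have : 0 ≤ B * (x i0 + R) := mul_nonneg hB0.le (by linarith)
            linarith
          linarith
        calc η * φ t x ≤ η * Real.exp (A * S) := by gcongr
          _ = δ₂ / 2 := by rw [hη, mul_assoc, ← Real.exp_add]; simp
      linarith)
  refine ⟨η * (Real.exp (A * (δ₁ - t0) - B * (2 * R)) - 1), ?_, fun t ht x hx => ?_⟩
  · apply mul_pos hη0
    have : 1 < Real.exp (A * (δ₁ - t0) - B * (2 * R)) := Real.one_lt_exp_iff.2 (by linarith)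
    linarith
  · have h1 := main t ⟨ht01.le.trans ht.1, ht.2⟩ x hx
    have h2 := (abs_le.1 (hR x hx)).2
    have h3 : Real.exp (A * (δ₁ - t0) - B * (2 * R)) - 1 ≤ φ t x := by
      simp only [φ]
      apply sub_le_sub_right
      apply Real.exp_le_exp.2
      have := mul_le_mul_of_nonneg_left ht.1 hA0.le
      have : B * (x i0 + R) ≤ B * (2 * R) := mul_le_mul_of_nonneg_left (by linarith) hB0.le
      linarith
    have := mul_le_mul_of_nonneg_left h3 hη0.le
    linarith

theorem F_bounds {f : ℝ → ℝ} (hd : Differentiable ℝ f) (hd2 : Differentiable ℝ (deriv f))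
    (h0 : f 0 = 0) (hc1 : ∀ u, 0 ≤ u → deriv (deriv f) u ≤ 0)
    (hc2 : ∀ u, u ≤ 0 → 0 ≤ deriv (deriv f) u) :
    (∀ u, 0 ≤ u → f u ≤ deriv f 0 * u) ∧ (∀ u, u ≤ 0 → deriv f 0 * u ≤ f u) := by
  have ha : AntitoneOn (deriv f) (Ici 0) :=
    antitoneOn_of_deriv_nonpos (convex_Ici 0) hd2.continuous.continuousOn
      hd2.differentiableOn (fun u hu => hc1 u (interior_subset hu))
  have hm : MonotoneOn (deriv f) (Iic 0) :=
    monotoneOn_of_deriv_nonneg (convex_Iic 0) hd2.continuous.continuousOn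
      hd2.differentiableOn (fun u hu => hc2 u (mem_Iic.1 (interior_subset hu)))
  constructor
  · intro u hu
    rcases hu.lt_or_eq with h | h
    · obtain ⟨ξ, hξ, he⟩ := exists_deriv_eq_slope f h hd.continuous.continuousOn hd.differentiableOn
      have h1 := ha (mem_Ici.2 le_rfl) (mem_Ici.2 hξ.1.le) hξ.1.le
      rw [he, h0, sub_zero, sub_zero, div_le_iff₀ h] at h1
      exact h1
    · rw [← h, h0]; simp
  · intro u hu
    rcases hu.lt_or_eq with h | h
    · obtain ⟨ξ, hξ, he⟩ := exists_deriv_eq_slope f h hd.continuous.continuousOn hd.differentiableOn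
      have h1 := hm (mem_Iic.2 hξ.2.le) (mem_Iic.2 le_rfl) hξ.2.le
      rw [he, h0, div_le_iff₀ (by linarith)] at h1
      linarith
    · rw [h, h0]; simp

theorem F_lip {n : ℕ} {Ω : Set (Fin n → ℝ)} (hΩb : Bornology.IsBounded Ω) {S : ℝ}
    {F : ℝ → (Fin n → ℝ) → ℝ → ℝ} (hF : C1InU Ω S F)
    (hF0 : ∀ t ∈ Icc 0 S, ∀ x ∈ closure Ω, F t x 0 = 0)
    {v : ℝ → (Fin n → ℝ) → ℝ}
    (hc : ContinuousOn (fun p : ℝ × (Fin n → ℝ) => v p.1 p.2) (Icc 0 S ×ˢ closure Ω)) :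
    ∃ L, ∀ t ∈ Icc 0 S, ∀ x ∈ closure Ω, |F t x (v t x)| ≤ L * |v t x| := by
  have hK : IsCompact (Icc 0 S ×ˢ closure Ω) := isCompact_Icc.prod hΩb.isCompact_closure
  obtain ⟨b, hb⟩ := hK.exists_bound_of_continuousOn hc
  have hK2 : IsCompact (Icc 0 S ×ˢ closure Ω ×ˢ Icc (-b) b) :=
    isCompact_Icc.prod (hΩb.isCompact_closure.prod isCompact_Icc)
  obtain ⟨L, hL⟩ := hK2.exists_bound_of_continuousOn
    (hF.2.2.mono (prod_mono le_rfl (prod_mono le_rfl (subset_univ _))))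
  refine ⟨L, fun t ht x hx => ?_⟩
  have hvb := abs_le.1 (hb (t, x) ⟨ht, hx⟩)
  have hb0 : 0 ≤ b := (norm_nonneg _).trans (hb (t, x) ⟨ht, hx⟩)
  have := (convex_Icc (-b) b).norm_image_sub_le_of_norm_deriv_le (f := F t x) (C := L)
    (fun u _ => hF.2.1 t ht x hx u) (fun u hu => hL (t, x, u) ⟨ht, hx, hu⟩)
    (x := 0) (y := v t x) ⟨by linarith, hb0⟩ hvb
  simpa [hF0 t ht x hx] using this

theorem comparison {n : ℕ} {Ω : Set (Fin n → ℝ)} (hΩo : IsOpen Ω)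
    (hΩb : Bornology.IsBounded Ω) {S C r L σ lam : ℝ} (hS : 0 < S) (hr : 0 < r)
    {χ q w v f : ℝ → (Fin n → ℝ) → ℝ} (hχ0 : ∀ t ∈ Icc 0 S, ∀ x ∈ frontier Ω, 0 ≤ χ t x)
    (hC : ∀ t ∈ Ioo 0 S, ∀ x ∈ Ω, |q t x| ≤ C)
    (hw : IsClassicalSolution Ω S q (fun _ _ => (0 : ℝ)) χ w) (hσ : σ * lam = r)
    (hv : IsClassicalSolution Ω S (fun _ _ => (0 : ℝ)) (fun t x => - f t x)
      (fun t x => lam * χ t x) v)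
    (hL : ∀ t ∈ Ioo 0 S, ∀ x ∈ Ω, |σ * f t x| ≤ L * |σ * v t x|)
    (hq : ∀ t ∈ Ioo 0 S, ∀ x ∈ Ω, 0 ≤ σ * v t x → σ * f t x ≤ q t x * (σ * v t x)) :
    ∀ t ∈ Icc 0 S, ∀ x ∈ closure Ω, r * w t x ≤ σ * v t x := by
  have hp : ∀ t ∈ Icc 0 S, ∀ x ∈ closure Ω, 0 ≤ σ * v t x + 0 * v t x := by
    refine min_principle (z := fun t x => σ * v t x + 0 * v t x) hΩo hΩb hS
      ((continuousOn_const.mul hv.cont).add (continuousOn_const.mul hv.cont)) L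
      (fun t ht x hx hz => ⟨_, _, (sol_jet hΩo hv ht hx).lin (sol_jet hΩo hv ht hx) σ 0, ?_⟩)
      (fun x hx => by simp [hv.initial x hx]) (fun t ht x hx => ?_)
    · have h1 := hv.eqn t ht x hx
      have h2 := hL t ht x hx
      have hz' : σ * v t x < 0 := by simpa using hz
      rw [abs_of_neg hz'] at h2
      have h3 := (abs_le.1 h2).2
      simp only [zero_mul, add_zero] at h1 ⊢
      rw [← mul_sub, h1]
      linarith
    · rw [hv.lateral t ht x hx]
      have : σ * (lam * χ t x) = r * χ t x := by rw [← mul_assoc, hσ]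
      have h0 := hχ0 t ht x hx
      rw [this]
      simp; positivity
  have hz : ∀ t ∈ Icc 0 S, ∀ x ∈ closure Ω, 0 ≤ σ * v t x + (-r) * w t x := by
    refine min_principle (z := fun t x => σ * v t x + (-r) * w t x) hΩo hΩb hS
      ((continuousOn_const.mul hv.cont).add (continuousOn_const.mul hw.cont)) C
      (fun t ht x hx hz => ⟨_, _, (sol_jet hΩo hv ht hx).lin (sol_jet hΩo hw ht hx) σ (-r), ?_⟩)
      (fun x hx => by simp [hv.initial x hx, hw.initial x hx]) (fun t ht x hx => ?_)
    · have h1 := hv.eqn t ht x hx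
      have h2 := hw.eqn t ht x hx
      have h3 := (abs_le.1 (hC t ht x hx)).1
      have h4 := hq t ht x hx (by simpa using hp t ⟨ht.1.le, ht.2.le⟩ x (subset_closure hx))
      simp only [zero_mul, add_zero] at h1
      have e : σ * timeDeriv v t x + -r * timeDeriv w t x - (σ * laplacian v t x + -r * laplacian w t x)
        = -(σ * f t x) + r * (q t x * w t x) := by
        linear_combination σ * h1 - r * h2
      rw [e]
      nlinarith
    · rw [hv.lateral t ht x hx, hw.lateral t ht x hx]
      have : σ * (lam * χ t x) = r * χ t x := by rw [← mul_assoc, hσ]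
      rw [this]; simp
  intro t ht x hx
  linarith [hz t ht x hx]

/-- range of the boundary values of the semilinear family: under the
structural assumptions on `F` and the first and second linearizations of the family `v_λ`,
the constant `a₁ := inf_{[δ₁,S] × cl Ω} w` is strictly positive and the set of values
`{v_λ(t₀,x₀) : λ ∈ [−r,r]}` contains `[−a₁r, a₁r]` for every `(t₀,x₀) ∈ (δ₁,S) × Ω`. -/
theorem statement6 {n : ℕ} (hn : 2 ≤ n) (Ω : Set (Fin n → ℝ)) (hΩo : IsOpen Ω)
    (hΩb : Bornology.IsBounded Ω) (hΩc : IsConnected Ω)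
    (S δ₁ δ₂ r : ℝ) (hS : 0 < S) (hδ₁ : 0 < δ₁) (hδ₁S : δ₁ < S) (hδ₂ : 0 < δ₂) (hr : 0 < r)
    (χ : ℝ → (Fin n → ℝ) → ℝ)
    (hχc : ContinuousOn (fun p : ℝ × (Fin n → ℝ) => χ p.1 p.2) (Icc 0 S ×ˢ frontier Ω))
    (hχ0 : ∀ t ∈ Icc 0 S, ∀ x ∈ frontier Ω, 0 ≤ χ t x)
    (hχδ : ∀ t ∈ Icc δ₁ S, ∀ x ∈ frontier Ω, χ t x = δ₂)
    (q : ℝ → (Fin n → ℝ) → ℝ)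
    (hqc : ContinuousOn (fun p : ℝ × (Fin n → ℝ) => q p.1 p.2) (Ioo 0 S ×ˢ Ω))
    (hqb : ∃ C, ∀ t ∈ Ioo 0 S, ∀ x ∈ Ω, |q t x| ≤ C)
    (F : ℝ → (Fin n → ℝ) → ℝ → ℝ) (hF : C2InU Ω S F)
    (hF0 : ∀ t ∈ Icc 0 S, ∀ x ∈ closure Ω, F t x 0 = 0)
    (hFconc : ∀ t ∈ Icc 0 S, ∀ x ∈ closure Ω,
      (∀ u : ℝ, 0 ≤ u → uDeriv2 F t x u ≤ 0) ∧ (∀ u : ℝ, u ≤ 0 → 0 ≤ uDeriv2 F t x u))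
    (hFq : ∀ t ∈ Ioo 0 S, ∀ x ∈ Ω, uDeriv F t x 0 ≤ q t x)
    (v v1 v2 : ℝ → ℝ → (Fin n → ℝ) → ℝ)
    (hfam : SemilinearFamily Ω S r χ F v v1 v2)
    (w : ℝ → (Fin n → ℝ) → ℝ)
    (hw : IsClassicalSolution Ω S q (fun _ _ => (0 : ℝ)) χ w) :
    0 < sInf ((fun p : ℝ × (Fin n → ℝ) => w p.1 p.2) '' (Icc δ₁ S ×ˢ closure Ω)) ∧
    ∀ t₀ ∈ Ioo δ₁ S, ∀ x₀ ∈ Ω,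
      ∀ s ∈ Icc (-(sInf ((fun p : ℝ × (Fin n → ℝ) => w p.1 p.2) ''
            (Icc δ₁ S ×ˢ closure Ω)) * r))
          (sInf ((fun p : ℝ × (Fin n → ℝ) => w p.1 p.2) '' (Icc δ₁ S ×ˢ closure Ω)) * r),
        ∃ lam ∈ Icc (-r) r, v lam t₀ x₀ = s := by
  obtain ⟨C, hC⟩ := hqb
  have hS' := hS
  obtain ⟨xx, hxx⟩ := hΩc.nonempty
  have hC0 : 0 ≤ C := (abs_nonneg _).trans (hC (S / 2) ⟨by linarith, by linarith⟩ xx hxx)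
  obtain ⟨m, hm, hmw⟩ := w_pos ⟨0, by omega⟩ hΩo hΩb hδ₁ hδ₁S hδ₂ hC0 hχ0 hχδ hC hw
  have hne : ((fun p : ℝ × (Fin n → ℝ) => w p.1 p.2) '' (Icc δ₁ S ×ˢ closure Ω)).Nonempty :=
    ⟨_, (δ₁, xx), ⟨⟨le_rfl, hδ₁S.le⟩, subset_closure hxx⟩, rfl⟩
  have hlb : ∀ b ∈ (fun p : ℝ × (Fin n → ℝ) => w p.1 p.2) '' (Icc δ₁ S ×ˢ closure Ω), m ≤ b := by
    rintro b ⟨p, hp, rfl⟩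
    exact hmw p.1 hp.1 p.2 hp.2
  refine ⟨hm.trans_le (le_csInf hne hlb), ?_⟩
  intro t₀ ht₀ x₀ hx₀ s hs
  have hx₀c := subset_closure hx₀
  have ht₀' : t₀ ∈ Icc 0 S := ⟨by linarith [ht₀.1], ht₀.2.le⟩
  have ha : sInf ((fun p : ℝ × (Fin n → ℝ) => w p.1 p.2) '' (Icc δ₁ S ×ˢ closure Ω)) ≤ w t₀ x₀ :=
    csInf_le ⟨m, hlb⟩ ⟨(t₀, x₀), ⟨⟨ht₀.1.le, ht₀.2.le⟩, hx₀c⟩, rfl⟩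
  have hrm : r ∈ Icc (-r) r := ⟨by linarith, le_rfl⟩
  have hrm' : -r ∈ Icc (-r) r := ⟨le_rfl, by linarith⟩
  have hb : ∀ t ∈ Ioo 0 S, ∀ x ∈ Ω, _ := fun t ht x hx =>
    F_bounds (f := F t x) (hF.1.2.1 t ⟨ht.1.le, ht.2.le⟩ x (subset_closure hx))
      (hF.2.1 t ⟨ht.1.le, ht.2.le⟩ x (subset_closure hx))
      (hF0 t ⟨ht.1.le, ht.2.le⟩ x (subset_closure hx))
      (hFconc t ⟨ht.1.le, ht.2.le⟩ x (subset_closure hx)).1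
      (hFconc t ⟨ht.1.le, ht.2.le⟩ x (subset_closure hx)).2
  have hup : r * w t₀ x₀ ≤ 1 * v r t₀ x₀ := by
    obtain ⟨L, hL⟩ := F_lip hΩb hF.1 hF0 (hfam.sol r hrm).cont
    refine comparison (L := L) (f := fun t x => F t x (v r t x)) hΩo hΩb hS hr hχ0 hC hw (one_mul r)
      (hfam.sol r hrm) (fun t ht x hx => ?_) (fun t ht x hx h0 => ?_) t₀ ht₀' x₀ hx₀c
    · simpa using hL t ⟨ht.1.le, ht.2.le⟩ x (subset_closure hx)
    · rw [one_mul] at h0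
      rw [one_mul, one_mul]
      exact ((hb t ht x hx).1 _ h0).trans (mul_le_mul_of_nonneg_right (hFq t ht x hx) h0)
  have hdn : r * w t₀ x₀ ≤ (-1) * v (-r) t₀ x₀ := by
    obtain ⟨L, hL⟩ := F_lip hΩb hF.1 hF0 (hfam.sol (-r) hrm').cont
    refine comparison (L := L) (f := fun t x => F t x (v (-r) t x)) hΩo hΩb hS hr hχ0 hC hw
      (show (-1) * (-r) = r by ring)
      (hfam.sol (-r) hrm') (fun t ht x hx => ?_) (fun t ht x hx h0 => ?_) t₀ ht₀' x₀ hx₀c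
    · simpa using hL t ⟨ht.1.le, ht.2.le⟩ x (subset_closure hx)
    · have h0' : v (-r) t x ≤ 0 := by linarith
      have h1 := (hb t ht x hx).2 _ h0'
      have h2 := mul_le_mul_of_nonpos_right (hFq t ht x hx) h0'
      simp only [uDeriv] at h2
      linarith
  have har := mul_le_mul_of_nonneg_right ha hr.le
  have hivt := intermediate_value_Icc (show -r ≤ r by linarith) (hfam.cont_lam t₀ ht₀' x₀ hx₀c)
  obtain ⟨lam, hl, he⟩ := hivt (show s ∈ Icc (v (-r) t₀ x₀) (v r t₀ x₀) from
    ⟨by linarith [hs.1], by linarith [hs.2]⟩)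
  exact ⟨lam, hl, he⟩
end
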